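/- arXiv:2303.00367 — 2 statements merged into one kernel-verified Lean document; each statement's English description precedes it below -/
import Mathlib

section
/- Let ℓ be a classical solution of the continuous swimmer problem with initial data ℓ₀ ∈ H²(0,Λ), and for each N let ℓ_h be the piecewise affine function built from a solution of the N-spring ODE system with initial values ℓ_j(0) = ℓ_{0,h}(y_j), ℓ_{0,h} ∈ V_h. Then there exists a constant C > 0, independent of h, such that for all t ≥ 0: ‖ℓ_h(·,t) − ℓ(·,t)‖ ≤ C‖ℓ_{0,h} − ℓ₀‖ + Ch²(‖∂_{yy}ℓ₀‖ + ‖∂_{yy}ℓ(·,t)‖) + Ch(∫₀^t ‖∂_{yt}ℓ(·,s)‖² ds)^{1/2}, where ‖·‖ denotes the L²(0,Λ) norm. (Theorem 1: first-order L² convergence of the discrete swimmer to the continuous one.) -/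
open MeasureTheory Set

noncomputable section

/-- `v` belongs to the finite element space `V_h`: continuous on `[0,Λ]`,
affine on each subinterval `[y_j, y_{j+1}]` of the uniform partition with `N`
cells, and vanishing at `Λ`. -/
def IsVh (Λ : ℝ) (N : ℕ) (v : ℝ → ℝ) : Prop :=
  ContinuousOn v (Set.Icc 0 Λ) ∧
  (∀ j : ℕ, j < N →
    ∃ a b : ℝ, ∀ y ∈ Set.Icc ((j : ℝ) * (Λ / N)) (((j : ℝ) + 1) * (Λ / N)),
      v y = a * y + b) ∧
  v Λ = 0

/-- Smoothness of the first partial derivative. -/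
lemma pd_fst {f : ℝ → ℝ → ℝ} (hf : ContDiff ℝ (⊤ : ℕ∞) (fun p : ℝ × ℝ => f p.1 p.2)) :
    ContDiff ℝ (⊤ : ℕ∞) (fun p : ℝ × ℝ => deriv (fun x => f x p.2) p.1) := by
  have h1 : ContDiff ℝ (⊤ : ℕ∞) (fderiv ℝ (fun p : ℝ × ℝ => f p.1 p.2)) :=
    hf.fderiv_right (by simp)
  have h2 : ContDiff ℝ (⊤ : ℕ∞)
      (fun p => fderiv ℝ (fun p : ℝ × ℝ => f p.1 p.2) p ((1 : ℝ), (0 : ℝ))) :=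
    h1.clm_apply contDiff_const
  convert h2 using 2 with p
  have hd : HasFDerivAt (fun p : ℝ × ℝ => f p.1 p.2)
      (fderiv ℝ (fun p : ℝ × ℝ => f p.1 p.2) p) (p.1, p.2) :=
    (hf.differentiable (by simp) p).hasFDerivAt
  have hg : HasDerivAt (fun x : ℝ => (x, p.2)) ((1 : ℝ), (0 : ℝ)) p.1 :=
    (hasDerivAt_id p.1).prodMk (hasDerivAt_const _ _)
  exact (hd.comp_hasDerivAt p.1 hg).deriv

/-- Smoothness of the second partial derivative. -/
lemma pd_snd {f : ℝ → ℝ → ℝ} (hf : ContDiff ℝ (⊤ : ℕ∞) (fun p : ℝ × ℝ => f p.1 p.2)) :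
    ContDiff ℝ (⊤ : ℕ∞) (fun p : ℝ × ℝ => deriv (fun s => f p.1 s) p.2) := by
  have h1 : ContDiff ℝ (⊤ : ℕ∞) (fderiv ℝ (fun p : ℝ × ℝ => f p.1 p.2)) :=
    hf.fderiv_right (by simp)
  have h2 : ContDiff ℝ (⊤ : ℕ∞)
      (fun p => fderiv ℝ (fun p : ℝ × ℝ => f p.1 p.2) p ((0 : ℝ), (1 : ℝ))) :=
    h1.clm_apply contDiff_const
  convert h2 using 2 with p
  have hd : HasFDerivAt (fun p : ℝ × ℝ => f p.1 p.2)
      (fderiv ℝ (fun p : ℝ × ℝ => f p.1 p.2) p) (p.1, p.2) :=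
    (hf.differentiable (by simp) p).hasFDerivAt
  have hg : HasDerivAt (fun x : ℝ => (p.1, x)) ((0 : ℝ), (1 : ℝ)) p.2 :=
    (hasDerivAt_const _ _).prodMk (hasDerivAt_id p.2)
  exact (hd.comp_hasDerivAt p.2 hg).deriv

lemma slice_fst {f : ℝ → ℝ → ℝ} (hf : ContDiff ℝ (⊤ : ℕ∞) (fun p : ℝ × ℝ => f p.1 p.2))
    (t : ℝ) : ContDiff ℝ (⊤ : ℕ∞) (fun x => f x t) :=
  hf.comp (contDiff_id.prodMk contDiff_const)

lemma slice_snd {f : ℝ → ℝ → ℝ} (hf : ContDiff ℝ (⊤ : ℕ∞) (fun p : ℝ × ℝ => f p.1 p.2))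
    (y : ℝ) : ContDiff ℝ (⊤ : ℕ∞) (fun s => f y s) :=
  hf.comp (contDiff_const.prodMk contDiff_id)

/-- Cauchy–Schwarz on an interval. -/
lemma cs_interval {p q : ℝ} (hpq : p ≤ q) {g : ℝ → ℝ} (hg : Continuous g) :
    (∫ y in p..q, |g y|) ^ 2 ≤ (q - p) * ∫ y in p..q, g y ^ 2 := by
  rcases hpq.eq_or_lt with rfl | hlt
  · simp
  set I := ∫ y in p..q, |g y| with hI
  set J := ∫ y in p..q, g y ^ 2 with hJ
  have hc : 0 < q - p := by linarith
  have hi1 : IntervalIntegrable (fun y => |g y|) volume p q := hg.abs.intervalIntegrable _ _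
  have hi2 : IntervalIntegrable (fun y => g y ^ 2) volume p q := (hg.pow 2).intervalIntegrable _ _
  have h0 : 0 ≤ ∫ y in p..q, ((q - p) * |g y| - I) ^ 2 :=
    intervalIntegral.integral_nonneg hpq (fun y _ => sq_nonneg _)
  have h1 : (∫ y in p..q, ((q - p) * |g y| - I) ^ 2)
      = (q - p) ^ 2 * J - 2 * (q - p) * I * I + I ^ 2 * (q - p) := by
    have : ∀ y, ((q - p) * |g y| - I) ^ 2
        = (q - p) ^ 2 * g y ^ 2 - 2 * (q - p) * I * |g y| + I ^ 2 := by
      intro y; rw [← sq_abs (g y)]; ring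
    simp only [this]
    rw [intervalIntegral.integral_add ((hi2.const_mul _).sub (hi1.const_mul _)) (by simp),
      intervalIntegral.integral_sub (hi2.const_mul _) (hi1.const_mul _)]
    simp only [intervalIntegral.integral_const_mul, intervalIntegral.integral_const, smul_eq_mul]
    rw [← hI, ← hJ]; ring
  rw [h1] at h0
  have : 0 ≤ (q - p) * ((q - p) * J - I ^ 2) := by nlinarith
  have := nonneg_of_mul_nonneg_right this hc
  linarith

/-- Oscillation bounded by the integral of the derivative. -/
lemma osc_bound {p q : ℝ} {w w' : ℝ → ℝ} (hw : ∀ y, HasDerivAt w (w' y) y)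
    (hc : Continuous w') {x z : ℝ} (hx : x ∈ Icc p q) (hz : z ∈ Icc p q) :
    |w z - w x| ≤ ∫ y in p..q, |w' y| := by
  have h1 : ∫ y in x..z, w' y = w z - w x :=
    intervalIntegral.integral_eq_sub_of_hasDerivAt (fun y _ => hw y) (hc.intervalIntegrable _ _)
  rw [← h1]
  have hpq : p ≤ q := hx.1.trans hx.2
  wlog hxz : x ≤ z generalizing x z
  · rw [intervalIntegral.integral_symm, abs_neg]
    refine this hz hx ?_ (le_of_not_ge hxz)
    exact intervalIntegral.integral_eq_sub_of_hasDerivAt (fun y _ => hw y) (hc.intervalIntegrable _ _)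
  calc |∫ y in x..z, w' y| ≤ ∫ y in x..z, |w' y| :=
        intervalIntegral.abs_integral_le_integral_abs hxz
    _ ≤ ∫ y in p..q, |w' y| := by
        apply intervalIntegral.integral_mono_interval hx.1 hxz hz.2
        · exact Filter.Eventually.of_forall (fun y => abs_nonneg _)
        · exact hc.abs.intervalIntegrable _ _

/-- Second order Taylor estimate. -/
lemma taylor_bound {p q c M : ℝ} {u u' u'' w : ℝ → ℝ}
    (hu : ∀ y, HasDerivAt u (u' y) y) (hu' : ∀ y, HasDerivAt u' (u'' y) y)
    (hpde : ∀ y ∈ uIcc p q, c * u'' y = w y)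
    (hM : ∀ y ∈ uIcc p q, |w y - w p| ≤ M) :
    |c * (u q - u p - u' p * (q - p)) - w p * (q - p) ^ 2 / 2| ≤ M * (q - p) ^ 2 := by
  have hMn : 0 ≤ M := (abs_nonneg _).trans (hM p left_mem_uIcc)
  have hconv : Convex ℝ (uIcc p q) := convex_uIcc p q
  have hF' : ∀ y ∈ uIcc p q, |c * (u' y - u' p) - w p * (y - p)| ≤ M * |q - p| := by
    intro y hy
    have := hconv.norm_image_sub_le_of_norm_hasDerivWithin_le
      (f := fun y => c * (u' y - u' p) - w p * (y - p)) (f' := fun y => c * u'' y - w p)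
      (C := M) (x := p) (y := y)
      (fun z hz => by
        have h1 := ((hu' z).sub_const (u' p)).const_mul c
        have h2 := ((hasDerivAt_id z).sub_const p).const_mul (w p)
        exact ((h1.sub h2).congr_deriv (by simp)).hasDerivWithinAt)
      (fun z hz => by rw [hpde z hz]; exact hM z hz) left_mem_uIcc hy
    simp only [Real.norm_eq_abs, sub_self, mul_zero, sub_zero] at this
    refine this.trans (mul_le_mul_of_nonneg_left ?_ hMn)
    rw [abs_sub_comm y p, abs_sub_comm q p]
    exact abs_sub_left_of_mem_uIcc hy |>.trans_eq (abs_sub_comm _ _) |> fun h => by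
      simpa [abs_sub_comm] using h
  have := hconv.norm_image_sub_le_of_norm_hasDerivWithin_le
      (f := fun y => c * (u y - u p - u' p * (y - p)) - w p * (y - p) ^ 2 / 2)
      (f' := fun y => c * (u' y - u' p) - w p * (y - p))
      (C := M * |q - p|) (x := p) (y := q)
      (fun z hz => by
        have h1 := (((hu z).sub_const (u p)).sub
          (((hasDerivAt_id z).sub_const p).const_mul (u' p))).const_mul c
        have h2 := ((((hasDerivAt_id z).sub_const p).pow 2).const_mul (w p)).div_const 2
        exact ((h1.sub h2).congr_deriv (by simp; ring)).hasDerivWithinAt)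
      hF' left_mem_uIcc right_mem_uIcc
  simp only [Real.norm_eq_abs, sub_self, mul_zero, sub_zero, ne_eq, OfNat.ofNat_ne_zero,
    not_false_eq_true, zero_pow, zero_div] at this
  rwa [mul_assoc, abs_mul_abs_self, ← sq] at this

/-- Interpolation error on a cell. -/
lemma interp_err {p h : ℝ} (hh : 0 < h) {f f' f'' : ℝ → ℝ}
    (hf : ∀ y, HasDerivAt f (f' y) y) (hf' : ∀ y, HasDerivAt f' (f'' y) y)
    (hc : Continuous f'') (a b : ℝ) (hvp : a * p + b = f p) (hvq : a * (p + h) + b = f (p + h))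
    {y : ℝ} (hy : y ∈ Icc p (p + h)) :
    (a * y + b - f y) ^ 2 ≤ h ^ 3 * ∫ z in p..(p + h), f'' z ^ 2 := by
  have hg : ∀ z, HasDerivAt (fun z => a * z + b - f z) (a - f' z) z := fun z => by
    have := (((hasDerivAt_id z).const_mul a).add_const b).sub (hf z)
    exact this.congr_deriv (by simp)
  have hg' : ∀ z, HasDerivAt (fun z => a - f' z) (- f'' z) z := fun z => (hf' z).const_sub a
  obtain ⟨ξ, hξ, hξ0⟩ := exists_hasDerivAt_eq_zero (f := fun z => a * z + b - f z)
    (f' := fun z => a - f' z) (by linarith : p < p + h)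
    (fun z _ => (hg z).continuousAt.continuousWithinAt) (by linarith)
    (fun z _ => hg z)
  set I := ∫ z in p..(p + h), |f'' z|
  have hI0 : 0 ≤ I := intervalIntegral.integral_nonneg (by linarith) (fun _ _ => abs_nonneg _)
  have hb : ∀ z ∈ Icc p (p + h), |a - f' z| ≤ I := by
    intro z hz
    have := osc_bound hg' hc.neg (Ioo_subset_Icc_self hξ) hz
    rw [hξ0] at this
    simpa using this
  have h1 := (convex_Icc p (p + h)).norm_image_sub_le_of_norm_hasDerivWithin_le
    (f := fun z => a * z + b - f z) (f' := fun z => a - f' z) (C := I) (x := p) (y := y)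
    (fun z _ => (hg z).hasDerivWithinAt) hb (by constructor <;> linarith) hy
  have e0 : a * p + b - f p = 0 := by linarith
  simp only [Real.norm_eq_abs, e0, sub_zero] at h1
  rw [abs_of_nonneg (by linarith [hy.1] : 0 ≤ y - p)] at h1
  have h2 : |a * y + b - f y| ≤ I * h :=
    h1.trans (mul_le_mul_of_nonneg_left (by linarith [hy.2]) hI0)
  have h3 := cs_interval (by linarith : p ≤ p + h) hc
  rw [add_sub_cancel_left] at h3
  calc (a * y + b - f y) ^ 2 = |a * y + b - f y| ^ 2 := (sq_abs _).symm
    _ ≤ (I * h) ^ 2 := pow_le_pow_left₀ (abs_nonneg _) h2 2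
    _ = h ^ 2 * I ^ 2 := by ring
    _ ≤ h ^ 2 * (h * ∫ z in p..(p + h), f'' z ^ 2) := mul_le_mul_of_nonneg_left h3 (by positivity)
    _ = _ := by ring

/-- integral of the square of an affine function on a cell. -/
lemma affine_sq (p h d e : ℝ) (hh : 0 < h) :
    ∫ y in p..(p + h), (d + (e - d) * ((y - p) / h)) ^ 2 = h * (d ^ 2 + d * e + e ^ 2) / 3 := by
  have hd : ∀ y ∈ uIcc p (p + h), HasDerivAt
      (fun y => d ^ 2 * (y - p) + d * (e - d) / h * (y - p) ^ 2
        + (e - d) ^ 2 / (3 * h ^ 2) * (y - p) ^ 3)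
      ((d + (e - d) * ((y - p) / h)) ^ 2) y := fun y _ => by
    have h0 := (hasDerivAt_id y).sub_const p
    have := ((h0.const_mul (d ^ 2)).add ((h0.pow 2).const_mul (d * (e - d) / h))).add
      ((h0.pow 3).const_mul ((e - d) ^ 2 / (3 * h ^ 2)))
    exact this.congr_deriv (by simp; field_simp; ring)
  rw [intervalIntegral.integral_eq_sub_of_hasDerivAt hd
    (Continuous.intervalIntegrable (by fun_prop) _ _)]
  simp; field_simp; ring

/-- Both cell estimates. -/
lemma cell_est {p h : ℝ} (hh : 0 < h) {f f' f'' v : ℝ → ℝ}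
    (hf : ∀ y, HasDerivAt f (f' y) y) (hf' : ∀ y, HasDerivAt f' (f'' y) y)
    (hc : Continuous f'') (hv : ∃ a b : ℝ, ∀ y ∈ Icc p (p + h), v y = a * y + b) :
    (∫ y in p..(p + h), (v y - f y) ^ 2) ≤
      h * ((v p - f p) ^ 2 + (v (p + h) - f (p + h)) ^ 2)
        + 2 * h ^ 4 * ∫ y in p..(p + h), f'' y ^ 2 ∧
    h * ((v p - f p) ^ 2 + (v (p + h) - f (p + h)) ^ 2) ≤
      12 * (∫ y in p..(p + h), (v y - f y) ^ 2)
        + 12 * h ^ 4 * ∫ y in p..(p + h), f'' y ^ 2 := by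
  obtain ⟨a, b, hab⟩ := hv
  have hp : v p = a * p + b := hab p (by constructor <;> linarith)
  have hq : v (p + h) = a * (p + h) + b := hab (p + h) (by constructor <;> linarith)
  set d := v p - f p with hd
  set e := v (p + h) - f (p + h) with he
  set J := ∫ y in p..(p + h), f'' y ^ 2 with hJ
  have hfc : Continuous f := continuous_iff_continuousAt.2 fun y => (hf y).continuousAt
  have hle : p ≤ p + h := by linarith
  -- affine part and interpolation error
  set A : ℝ → ℝ := fun y => d + (e - d) * ((y - p) / h) with hA
  have hAc : Continuous A := by fun_prop
  set a' := a - (e - d) / h with ha'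
  set b' := b - d + (e - d) * p / h with hb'
  have hsplit : ∀ y, a * y + b - f y = A y + (a' * y + b' - f y) := by
    intro y; simp only [hA, ha', hb']; field_simp; ring
  have hE : ∀ y ∈ Icc p (p + h), (a' * y + b' - f y) ^ 2 ≤ h ^ 3 * J := by
    intro y hy
    refine interp_err hh hf hf' hc a' b' ?_ ?_ hy
    · have := hsplit p
      simp only [hA, sub_self, zero_div, mul_zero, add_zero] at this
      linarith
    · have := hsplit (p + h)
      simp only [hA, add_sub_cancel_left, div_self hh.ne', mul_one] at this
      linarith
  have hEc : Continuous (fun y => a' * y + b' - f y) := by fun_prop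
  have hEi : ∫ y in p..(p + h), (a' * y + b' - f y) ^ 2 ≤ h ^ 4 * J := by
    calc ∫ y in p..(p + h), (a' * y + b' - f y) ^ 2 ≤ ∫ y in p..(p + h), h ^ 3 * J :=
        intervalIntegral.integral_mono_on hle ((hEc.pow 2).intervalIntegrable _ _) (by simp) hE
      _ = h ^ 4 * J := by simp; ring
  have hAi := affine_sq p h d e hh
  have hcongr : (∫ y in p..(p + h), (v y - f y) ^ 2) = ∫ y in p..(p + h), (a * y + b - f y) ^ 2 := by
    apply intervalIntegral.integral_congr
    intro y hy
    rw [uIcc_of_le hle] at hy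
    simp only [hab y hy]
  have hVc : Continuous (fun y => a * y + b - f y) := by fun_prop
  have iA : IntervalIntegrable (fun y => A y ^ 2) volume p (p + h) := (hAc.pow 2).intervalIntegrable (μ := volume) p (p + h)
  have iE : IntervalIntegrable (fun y => (a' * y + b' - f y) ^ 2) volume p (p + h) :=
    (hEc.pow 2).intervalIntegrable (μ := volume) p (p + h)
  have iV : IntervalIntegrable (fun y => (a * y + b - f y) ^ 2) volume p (p + h) :=
    (hVc.pow 2).intervalIntegrable (μ := volume) p (p + h)
  have up : (∫ y in p..(p + h), (a * y + b - f y) ^ 2) ≤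
      2 * (∫ y in p..(p + h), A y ^ 2) + 2 * ∫ y in p..(p + h), (a' * y + b' - f y) ^ 2 := by
    rw [← intervalIntegral.integral_const_mul, ← intervalIntegral.integral_const_mul,
      ← intervalIntegral.integral_add (iA.const_mul 2) (iE.const_mul 2)]
    refine intervalIntegral.integral_mono_on hle iV ((iA.const_mul 2).add (iE.const_mul 2)) ?_
    intro y _
    rw [hsplit y]
    nlinarith [sq_nonneg (A y - (a' * y + b' - f y))]
  have lo : (∫ y in p..(p + h), A y ^ 2) ≤ 2 * (∫ y in p..(p + h), (a * y + b - f y) ^ 2)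
      + 2 * ∫ y in p..(p + h), (a' * y + b' - f y) ^ 2 := by
    rw [← intervalIntegral.integral_const_mul, ← intervalIntegral.integral_const_mul,
      ← intervalIntegral.integral_add (iV.const_mul 2) (iE.const_mul 2)]
    refine intervalIntegral.integral_mono_on hle iA ((iV.const_mul 2).add (iE.const_mul 2)) ?_
    intro y _
    rw [hsplit y]
    nlinarith [sq_nonneg (A y + 2 * (a' * y + b' - f y))]
  rw [hcongr]
  have hAi' : (∫ y in p..(p + h), A y ^ 2) = h * (d ^ 2 + d * e + e ^ 2) / 3 := hAi
  rw [hAi'] at up lo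
  have q1 := mul_nonneg hh.le (sq_nonneg (d - e))
  have q2 := mul_nonneg hh.le (sq_nonneg (d + e))
  clear hAi hAi' hE hEc hcongr hVc iA iE iV hsplit hab hp hq
  generalize (∫ y in p..(p + h), (a * y + b - f y) ^ 2) = V at *
  generalize (∫ y in p..(p + h), (a' * y + b' - f y) ^ 2) = W at *
  clear_value A a' b' d e J
  constructor
  · linarith
  · linarith

/-- Discrete energy identity. -/
lemma energy_alg {N : ℕ} (hN : 0 < N) {h c α : ℝ} (x xd R : ℕ → ℝ)
    (hxN : x N = 0)
    (h0 : h * xd 0 = c * (x 1 - x 0) / h - α * x 0 - R 0)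
    (h1 : ∀ j, j + 1 < N →
      h * xd (j + 1) = c * (x j - 2 * x (j + 1) + x (j + 2)) / h - R (j + 1)) :
    ∑ j ∈ Finset.range N, h * xd j * x j =
      -(c / h) * ∑ j ∈ Finset.range N, (x (j + 1) - x j) ^ 2 - α * x 0 ^ 2
        - ∑ j ∈ Finset.range N, R j * x j := by
  have key : ∀ n, n + 1 ≤ N → ∑ j ∈ Finset.range (n + 1), h * xd j * x j =
      -(c / h) * ∑ j ∈ Finset.range n, (x (j + 1) - x j) ^ 2 - α * x 0 ^ 2
        - ∑ j ∈ Finset.range (n + 1), R j * x j + c / h * (x (n + 1) - x n) * x n := by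
    intro n
    induction n with
    | zero => intro _; simp; rw [h0]; ring
    | succ n ih =>
      intro hn
      rw [Finset.sum_range_succ, ih (by omega), h1 n (by omega),
        Finset.sum_range_succ (fun j => (x (j + 1) - x j) ^ 2) n,
        Finset.sum_range_succ (fun j => R j * x j) (n + 1)]
      ring
  obtain ⟨n, rfl⟩ : ∃ n, N = n + 1 := ⟨N - 1, by omega⟩
  rw [key n le_rfl, Finset.sum_range_succ (fun j => (x (j + 1) - x j) ^ 2) n, hxN]
  ring

/-- Discrete energy inequality. -/
lemma energy_ineq {N : ℕ} (hN : 0 < N) {Λ c α Q : ℝ} (hΛ : 0 < Λ) (hc : 0 < c) (hα : 0 ≤ α)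
    (x xd R : ℕ → ℝ) (hxN : x N = 0)
    (h0 : Λ / N * xd 0 = c * (x 1 - x 0) / (Λ / N) - α * x 0 - R 0)
    (h1 : ∀ j, j + 1 < N →
      Λ / N * xd (j + 1) = c * (x j - 2 * x (j + 1) + x (j + 2)) / (Λ / N) - R (j + 1))
    (hR : ∑ j ∈ Finset.range N, |R j| ≤ 3 * (Λ / N) * Q) :
    ∑ j ∈ Finset.range N, Λ / N * xd j * x j ≤ 9 / 4 * (Λ / N) ^ 2 * Q ^ 2 * Λ / c := by
  have hN' : (0 : ℝ) < N := by exact_mod_cast hN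
  rw [energy_alg hN x xd R hxN h0 h1]
  set h := Λ / N with hh
  have hpos : 0 < h := by positivity
  set X := ∑ j ∈ Finset.range N, |x (j + 1) - x j| with hX
  have hX0 : 0 ≤ X := Finset.sum_nonneg fun _ _ => abs_nonneg _
  have hmax : ∀ j ∈ Finset.range N, |x j| ≤ X := by
    intro j hj
    have hjN : j ≤ N := (Finset.mem_range.1 hj).le
    have : x j = -∑ i ∈ Finset.Ico j N, (x (i + 1) - x i) := by
      rw [Finset.sum_Ico_sub _ hjN, hxN]; ring
    rw [this, abs_neg]
    refine (Finset.abs_sum_le_sum_abs _ _).trans ?_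
    refine Finset.sum_le_sum_of_subset_of_nonneg ?_ (fun _ _ _ => abs_nonneg _)
    intro i hi
    simp only [Finset.mem_Ico, Finset.mem_range] at *
    exact hi.2
  have hXD : X ^ 2 ≤ N * ∑ j ∈ Finset.range N, (x (j + 1) - x j) ^ 2 := by
    have := sq_sum_le_card_mul_sum_sq (s := Finset.range N) (f := fun j => |x (j + 1) - x j|)
    simpa using this
  set D := ∑ j ∈ Finset.range N, (x (j + 1) - x j) ^ 2
  have hRx : -∑ j ∈ Finset.range N, R j * x j ≤ 3 * h * Q * X := by
    calc -∑ j ∈ Finset.range N, R j * x j ≤ |∑ j ∈ Finset.range N, R j * x j| := neg_le_abs _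
      _ ≤ ∑ j ∈ Finset.range N, |R j * x j| := Finset.abs_sum_le_sum_abs _ _
      _ ≤ ∑ j ∈ Finset.range N, |R j| * X := Finset.sum_le_sum fun j hj => by
          rw [abs_mul]; exact mul_le_mul_of_nonneg_left (hmax j hj) (abs_nonneg _)
      _ = (∑ j ∈ Finset.range N, |R j|) * X := by rw [Finset.sum_mul]
      _ ≤ _ := mul_le_mul_of_nonneg_right hR hX0
  have hD : c / Λ * X ^ 2 ≤ c / h * D := by
    have : c / h * D = c / Λ * (N * D) := by rw [hh]; field_simp
    rw [this]; exact mul_le_mul_of_nonneg_left hXD (by positivity)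
  have hfin : 3 * h * Q * X - c / Λ * X ^ 2 ≤ 9 / 4 * h ^ 2 * Q ^ 2 * Λ / c := by
    have : 9 / 4 * h ^ 2 * Q ^ 2 * Λ / c - (3 * h * Q * X - c / Λ * X ^ 2)
        = c / Λ * (X - 3 / 2 * h * Q * Λ / c) ^ 2 := by field_simp; ring
    have h2 : 0 ≤ c / Λ * (X - 3 / 2 * h * Q * Λ / c) ^ 2 := by positivity
    linarith
  nlinarith [mul_nonneg hα (sq_nonneg (x 0))]

lemma cells_integral {N : ℕ} (h : ℝ) {g : ℝ → ℝ}
    (hg : ∀ j < N, IntervalIntegrable g volume ((j : ℝ) * h) (j * h + h)) :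
    ∑ j ∈ Finset.range N, ∫ y in ((j : ℝ) * h)..(j * h + h), g y = ∫ y in (0 : ℝ)..(N * h), g y := by
  have := intervalIntegral.sum_integral_adjacent_intervals (a := fun j : ℕ => (j : ℝ) * h)
    (n := N) (f := g) (μ := volume) (fun k hk => by
      have := hg k hk
      push_cast; rw [add_mul, one_mul]; exact this)
  simp only [Nat.cast_zero, zero_mul] at this
  rw [← this]
  refine Finset.sum_congr rfl fun j _ => ?_
  push_cast; rw [add_mul, one_mul]

/-- Summed consistency error. -/
lemma consistency {N : ℕ} (hN : 0 < N) {Λ c : ℝ} (hΛ : 0 < Λ) {u u' u'' w w' : ℝ → ℝ}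
    (hu : ∀ y, HasDerivAt u (u' y) y) (hu' : ∀ y, HasDerivAt u' (u'' y) y)
    (hw : ∀ y, HasDerivAt w (w' y) y) (hc : Continuous w')
    (hpde : ∀ y ∈ Icc 0 Λ, c * u'' y = w y) (hwΛ : w Λ = 0) (R : ℕ → ℝ)
    (hR0 : R 0 = Λ / N * w 0 - c * (u (Λ / N) - u 0) / (Λ / N) + c * u' 0)
    (hR : ∀ j : ℕ, j + 1 < N → R (j + 1) = Λ / N * w ((j + 1) * (Λ / N)) -
      c * (u (j * (Λ / N)) - 2 * u ((j + 1) * (Λ / N)) + u ((j + 2) * (Λ / N))) / (Λ / N)) :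
    ∑ j ∈ Finset.range N, |R j| ≤ 3 * (Λ / N) * ∫ y in (0:ℝ)..Λ, |w' y| := by
  have hN' : (0 : ℝ) < N := by exact_mod_cast hN
  set h := Λ / N with hh
  have hpos : 0 < h := by positivity
  have hNh : N * h = Λ := by rw [hh]; field_simp
  set M : ℕ → ℝ := fun j => ∫ y in ((j : ℝ) * h)..(j * h + h), |w' y| with hM
  have hM0 : ∀ j, 0 ≤ M j := fun j =>
    intervalIntegral.integral_nonneg (by linarith) (fun _ _ => abs_nonneg _)
  have hQ : ∑ j ∈ Finset.range N, M j = ∫ y in (0:ℝ)..Λ, |w' y| := by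
    rw [← hNh]; exact cells_integral h fun j _ => hc.abs.intervalIntegrable _ _
  rw [← hQ]
  have hsub : ∀ j : ℕ, j < N → Icc ((j : ℝ) * h) (j * h + h) ⊆ Icc 0 Λ := by
    intro j hj y hy
    have : (j : ℝ) + 1 ≤ N := by exact_mod_cast hj
    refine ⟨le_trans (by positivity) hy.1, hy.2.trans ?_⟩
    rw [← hNh]; nlinarith
  have hfwd : ∀ j : ℕ, j < N → |c * (u (j * h + h) - u (j * h) - u' (j * h) * h)
      - w (j * h) * h ^ 2 / 2| ≤ M j * h ^ 2 := by
    intro j hj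
    have hI : uIcc ((j : ℝ) * h) (j * h + h) = Icc ((j : ℝ) * h) (j * h + h) :=
      uIcc_of_le (by linarith)
    have := taylor_bound (p := (j : ℝ) * h) (q := j * h + h) (M := M j) hu hu'
      (fun y hy => hpde y (hsub j hj (hI ▸ hy)))
      (fun y hy => osc_bound hw hc (by constructor <;> linarith) (hI ▸ hy))
    simpa using this
  have hbwd : ∀ j : ℕ, j < N → |c * (u (j * h) - u (j * h + h) + u' (j * h + h) * h)
      - w (j * h + h) * h ^ 2 / 2| ≤ M j * h ^ 2 := by
    intro j hj
    have hI : uIcc ((j : ℝ) * h + h) (j * h) = Icc ((j : ℝ) * h) (j * h + h) :=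
      uIcc_of_ge (by linarith)
    have := taylor_bound (p := (j : ℝ) * h + h) (q := j * h) (M := M j) hu hu'
      (fun y hy => hpde y (hsub j hj (hI ▸ hy)))
      (fun y hy => osc_bound hw hc (by constructor <;> linarith) (hI ▸ hy))
    rw [show (j : ℝ) * h - (j * h + h) = -h by ring] at this
    simpa using this
  have hw0 : |w 0| ≤ ∑ j ∈ Finset.range N, M j := by
    have := osc_bound (p := 0) (q := Λ) hw hc (x := Λ) (z := 0)
      (by constructor <;> linarith) (by constructor <;> linarith)
    rw [hQ]; simpa [hwΛ] using this
  have b0 : |R 0| ≤ h * M 0 + h / 2 * |w 0| := by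
    have e : R 0 = h / 2 * w 0
        - (c * (u ((0 : ℕ) * h + h) - u ((0 : ℕ) * h) - u' ((0 : ℕ) * h) * h)
          - w ((0 : ℕ) * h) * h ^ 2 / 2) / h := by
      rw [hR0]; simp; field_simp; ring
    rw [e]
    refine (abs_sub _ _).trans ?_
    rw [abs_mul, abs_div _ h, abs_of_pos hpos, abs_of_pos (by positivity : 0 < h / 2), add_comm]
    gcongr
    rw [div_le_iff₀ hpos]
    exact (hfwd 0 hN).trans (le_of_eq (by ring))
  have b1 : ∀ j : ℕ, j + 1 < N → |R (j + 1)| ≤ h * M j + h * M (j + 1) := by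
    intro j hj
    have f := hfwd (j + 1) hj
    have b := hbwd j (by omega)
    push_cast at f
    have e1 : ((j : ℝ) + 1) * h = j * h + h := by ring
    have e2 : ((j : ℝ) + 2) * h = j * h + h + h := by ring
    rw [e1] at f
    have e : R (j + 1) = - (c * (u (j * h + h + h) - u (j * h + h) - u' (j * h + h) * h)
      - w (j * h + h) * h ^ 2 / 2) / h - (c * (u (j * h) - u (j * h + h) + u' (j * h + h) * h)
      - w (j * h + h) * h ^ 2 / 2) / h := by
      rw [hR j hj, e1, e2]; field_simp; ring
    rw [e]
    refine (abs_sub _ _).trans ?_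
    rw [abs_div _ h, abs_div _ h, abs_neg, abs_of_pos hpos, add_comm]
    gcongr
    · rw [div_le_iff₀ hpos]; exact b.trans (le_of_eq (by ring))
    · rw [div_le_iff₀ hpos]; exact f.trans (le_of_eq (by ring))
  obtain ⟨n, rfl⟩ : ∃ n, N = n + 1 := ⟨N - 1, by omega⟩
  have s1 : ∑ j ∈ Finset.range n, |R (j + 1)|
      ≤ h * ∑ j ∈ Finset.range n, M j + h * ∑ j ∈ Finset.range n, M (j + 1) := by
    rw [Finset.mul_sum, Finset.mul_sum, ← Finset.sum_add_distrib]
    exact Finset.sum_le_sum fun j hj => b1 j (by simpa using hj)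
  have s2 := Finset.sum_range_succ' M n
  have s3 := Finset.sum_range_succ M n
  set S := ∑ j ∈ Finset.range (n + 1), M j
  have s4 : ∑ j ∈ Finset.range n, M j ≤ S := by linarith [hM0 n]
  have hS0 : 0 ≤ S := (abs_nonneg _).trans hw0
  rw [Finset.sum_range_succ']
  have t1 := mul_le_mul_of_nonneg_left s4 hpos.le
  have t2 := mul_le_mul_of_nonneg_left hw0 hpos.le
  have t3 : h * S = h * ∑ j ∈ Finset.range n, M (j + 1) + h * M 0 := by rw [s2]; ring
  have t4 := mul_nonneg hpos.le hS0
  nlinarith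

/-- Global versions of the cell estimates. -/
lemma global_est {N : ℕ} (hN : 0 < N) {Λ : ℝ} (hΛ : 0 < Λ) {f f' f'' v : ℝ → ℝ}
    (hf : ∀ y, HasDerivAt f (f' y) y) (hf' : ∀ y, HasDerivAt f' (f'' y) y)
    (hc : Continuous f'') (hv : IsVh Λ N v) (hfΛ : f Λ = 0) (e : ℕ → ℝ)
    (he : ∀ j < N, e j = v (j * (Λ / N)) - f (j * (Λ / N))) :
    (∫ y in (0:ℝ)..Λ, (v y - f y) ^ 2) ≤ 2 * (∑ j ∈ Finset.range N, Λ / N * e j ^ 2)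
        + 2 * (Λ / N) ^ 4 * ∫ y in (0:ℝ)..Λ, f'' y ^ 2 ∧
    (∑ j ∈ Finset.range N, Λ / N * e j ^ 2) ≤ 12 * (∫ y in (0:ℝ)..Λ, (v y - f y) ^ 2)
        + 12 * (Λ / N) ^ 4 * ∫ y in (0:ℝ)..Λ, f'' y ^ 2 := by
  obtain ⟨hvc, hva, hvΛ⟩ := hv
  have hN' : (0 : ℝ) < N := by exact_mod_cast hN
  set h := Λ / N with hh
  have hpos : 0 < h := by positivity
  have hNh : N * h = Λ := by rw [hh]; field_simp
  have hfc : Continuous f := continuous_iff_continuousAt.2 fun y => (hf y).continuousAt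
  set d : ℕ → ℝ := fun j => v (j * h) - f (j * h) with hd
  have hdN : d N = 0 := by simp [hd, hNh, hvΛ, hfΛ]
  have hE : ∑ j ∈ Finset.range N, h * e j ^ 2 = ∑ j ∈ Finset.range N, h * d j ^ 2 :=
    Finset.sum_congr rfl fun j hj => by rw [he j (Finset.mem_range.1 hj)]
  rw [hE]
  have hsub : ∀ j : ℕ, j < N → Icc ((j : ℝ) * h) (j * h + h) ⊆ Icc 0 Λ := by
    intro j hj y hy
    have : (j : ℝ) + 1 ≤ N := by exact_mod_cast hj
    refine ⟨le_trans (by positivity) hy.1, hy.2.trans ?_⟩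
    rw [← hNh]; nlinarith
  have hI1 : ∑ j ∈ Finset.range N, ∫ y in ((j : ℝ) * h)..(j * h + h), (v y - f y) ^ 2
      = ∫ y in (0:ℝ)..Λ, (v y - f y) ^ 2 := by
    rw [← hNh]
    refine cells_integral h fun j hj => ContinuousOn.intervalIntegrable ?_
    rw [uIcc_of_le (by linarith)]
    exact ((hvc.mono (hsub j hj)).sub hfc.continuousOn).pow 2
  have hI2 : ∑ j ∈ Finset.range N, ∫ y in ((j : ℝ) * h)..(j * h + h), f'' y ^ 2
      = ∫ y in (0:ℝ)..Λ, f'' y ^ 2 := by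
    rw [← hNh]
    exact cells_integral h fun j hj => (hc.pow 2).intervalIntegrable _ _
  have hcell : ∀ j ∈ Finset.range N, _ := fun j hj => cell_est (p := (j : ℝ) * h) (v := v)
    hpos hf hf' hc (by
      obtain ⟨a, b, hab⟩ := hva j (Finset.mem_range.1 hj)
      exact ⟨a, b, fun y hy => hab y (by rwa [add_mul, one_mul])⟩)
  have hd1 : ∀ j : ℕ, v (j * h + h) - f (j * h + h) = d (j + 1) := fun j => by
    simp only [hd]; push_cast; rw [add_mul, one_mul]
  simp only [hd1] at hcell
  have hsum : ∑ j ∈ Finset.range N, h * (d j ^ 2 + d (j + 1) ^ 2)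
      = 2 * (∑ j ∈ Finset.range N, h * d j ^ 2) - h * d 0 ^ 2 := by
    have h1 := Finset.sum_range_succ' (fun j => h * d j ^ 2) N
    have h2 := Finset.sum_range_succ (fun j => h * d j ^ 2) N
    simp only [mul_add, Finset.sum_add_distrib]
    rw [hdN] at h2
    linarith
  have hfirst : h * d 0 ^ 2 ≤ ∑ j ∈ Finset.range N, h * d j ^ 2 :=
    Finset.single_le_sum (f := fun j => h * d j ^ 2) (fun j _ => by positivity)
      (Finset.mem_range.2 hN)
  have hf0 : 0 ≤ h * d 0 ^ 2 := by positivity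
  have u1 := Finset.sum_le_sum fun j hj => (hcell j hj).1
  have u2 := Finset.sum_le_sum fun j hj => (hcell j hj).2
  rw [Finset.sum_add_distrib, hI1, ← Finset.mul_sum (a := 2 * h ^ 4), hI2] at u1
  rw [Finset.sum_add_distrib, ← Finset.mul_sum (a := 12), ← Finset.mul_sum (a := 12 * h ^ 4), hI1, hI2] at u2
  have hsum' : ∑ j ∈ Finset.range N, h * ((v (j * h) - f (j * h)) ^ 2 + d (j + 1) ^ 2)
      = 2 * (∑ j ∈ Finset.range N, h * d j ^ 2) - h * d 0 ^ 2 := hsum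
  rw [hsum'] at u1 u2
  constructor <;> linarith

lemma final_sqrt {V A B D F h C1 : ℝ} (hA : 0 ≤ A) (hB : 0 ≤ B) (hD : 0 ≤ D) (hF : 0 ≤ F)
    (hh : 0 < h) (hC1 : 0 ≤ C1)
    (hV : V ≤ 24 * A + 24 * h ^ 4 * B + 2 * h ^ 4 * D + C1 * h ^ 2 * F) :
    √V ≤ (5 + C1) * √A + (5 + C1) * h ^ 2 * (√B + √D) + (5 + C1) * h * √F := by
  apply Real.sqrt_le_iff.2
  refine ⟨by positivity, hV.trans ?_⟩
  have e1 := Real.sq_sqrt hA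
  have e2 := Real.sq_sqrt hB
  have e3 := Real.sq_sqrt hD
  have e4 := Real.sq_sqrt hF
  set x := √A
  set y := √B
  set z := √D
  set w := √F
  have hx : 0 ≤ x := Real.sqrt_nonneg _
  have hy : 0 ≤ y := Real.sqrt_nonneg _
  have hz : 0 ≤ z := Real.sqrt_nonneg _
  have hw : 0 ≤ w := Real.sqrt_nonneg _
  rw [← e1, ← e2, ← e3, ← e4]
  have k1 : (24 : ℝ) ≤ (5 + C1) ^ 2 := by nlinarith
  have k2 : C1 ≤ (5 + C1) ^ 2 := by nlinarith
  have k3 : (2 : ℝ) ≤ (5 + C1) ^ 2 := by nlinarith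
  calc 24 * x ^ 2 + 24 * h ^ 4 * y ^ 2 + 2 * h ^ 4 * z ^ 2 + C1 * h ^ 2 * w ^ 2
      ≤ (5 + C1) ^ 2 * x ^ 2 + (5 + C1) ^ 2 * h ^ 4 * y ^ 2 + (5 + C1) ^ 2 * h ^ 4 * z ^ 2
        + (5 + C1) ^ 2 * h ^ 2 * w ^ 2 := by gcongr
    _ ≤ (5 + C1) ^ 2 * x ^ 2 + (5 + C1) ^ 2 * h ^ 4 * y ^ 2 + (5 + C1) ^ 2 * h ^ 4 * z ^ 2
        + (5 + C1) ^ 2 * h ^ 2 * w ^ 2 + 2 * (5 + C1) ^ 2 * (h ^ 4 * (y * z)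
          + x * (h ^ 2 * (y + z)) + x * (h * w) + h ^ 2 * (y + z) * (h * w)) :=
        le_add_of_nonneg_right (by positivity)
    _ = _ := by ring

/-- Theorem 1 (first-order `L²` convergence of the discrete swimmer to the
continuous one). Let `ℓ = ℓ(y,t)` be a smooth solution of the continuous
swimmer problem (heat equation with Fourier-type boundary condition at `0` and
Dirichlet condition at `Λ`, forced by `L̇₀`), with initial data `ℓ₀ = ℓ(·,0)`.
Then there is `C > 0`, independent of `h = Λ/N`, such that for every `N`, every
solution `ℓd` of the `N`-spring ODE system with initial values
`ℓd_j(0) = ℓ_{0,h}(y_j)` for some `ℓ_{0,h} ∈ V_h`, and the piecewise affine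
interpolant `ℓh(·,t) ∈ V_h` with `ℓh(y_j,t) = ℓd_j(t)`, one has for all `t ≥ 0`:
`‖ℓh(·,t) − ℓ(·,t)‖ ≤ C‖ℓ_{0,h} − ℓ₀‖ + Ch²(‖∂_{yy}ℓ₀‖ + ‖∂_{yy}ℓ(·,t)‖)
  + Ch(∫₀^t ‖∂_{yt}ℓ(·,s)‖² ds)^{1/2}`. -/
theorem discrete_to_continuous_L2_convergence (Λ K a a1 : ℝ)
    (hΛ : 0 < Λ) (hK : 0 < K) (ha : 0 < a) (ha1 : 0 < a1)
    (L0 : ℝ → ℝ) (hL0 : ContDiff ℝ (⊤ : ℕ∞) L0)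
    (ℓ : ℝ → ℝ → ℝ)
    (hreg : ContDiff ℝ (⊤ : ℕ∞) (fun p : ℝ × ℝ => ℓ p.1 p.2))
    (hpde : ∀ y ∈ Set.Ioo (0 : ℝ) Λ, ∀ t > (0 : ℝ),
      deriv (fun s => ℓ y s) t =
        Λ ^ 2 * K * deriv (fun x => deriv (fun x' => ℓ x' t) x) y)
    (hbc0 : ∀ t > (0 : ℝ),
      Λ ^ 2 * K * deriv (fun x => ℓ x t) 0 - Λ * K * (a / (2 * a1)) * ℓ 0 t =
        (Λ / 2) * deriv L0 t)
    (hbcΛ : ∀ t > (0 : ℝ), ℓ Λ t = 0) :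
    ∃ C > 0, ∀ N : ℕ, 0 < N →
      ∀ (ℓd : ℕ → ℝ → ℝ) (ℓ0h : ℝ → ℝ) (ℓh : ℝ → ℝ → ℝ),
      (∀ j : ℕ, 1 ≤ j → j ≤ N → Differentiable ℝ (ℓd j)) →
      (∀ j : ℕ, 2 ≤ j → j ≤ N → ∀ t : ℝ,
        deriv (ℓd j) t =
          Λ ^ 2 * K * (ℓd (j - 1) t - 2 * ℓd j t + ℓd (j + 1) t) / (Λ / N) ^ 2) →
      (∀ t : ℝ, (Λ / N) * deriv (ℓd 1) t =
        Λ ^ 2 * K * (ℓd 2 t - ℓd 1 t) / (Λ / N) - (Λ * K * a / (2 * a1)) * ℓd 1 t -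
          (Λ / 2) * deriv L0 t) →
      (∀ t : ℝ, ℓd (N + 1) t = 0) →
      IsVh Λ N ℓ0h →
      (∀ j : ℕ, 1 ≤ j → j ≤ N + 1 → ℓd j 0 = ℓ0h (((j : ℝ) - 1) * (Λ / N))) →
      (∀ t : ℝ, IsVh Λ N (fun y => ℓh y t)) →
      (∀ j : ℕ, 1 ≤ j → j ≤ N + 1 → ∀ t : ℝ,
        ℓh (((j : ℝ) - 1) * (Λ / N)) t = ℓd j t) →
      ∀ t ≥ (0 : ℝ),
        Real.sqrt (∫ y in (0:ℝ)..Λ, (ℓh y t - ℓ y t) ^ 2) ≤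
          C * Real.sqrt (∫ y in (0:ℝ)..Λ, (ℓ0h y - ℓ y 0) ^ 2) +
          C * (Λ / N) ^ 2 *
            (Real.sqrt (∫ y in (0:ℝ)..Λ,
                (deriv (fun x => deriv (fun x' => ℓ x' 0) x) y) ^ 2) +
              Real.sqrt (∫ y in (0:ℝ)..Λ,
                (deriv (fun x => deriv (fun x' => ℓ x' t) x) y) ^ 2)) +
          C * (Λ / N) *
            Real.sqrt (∫ s in (0:ℝ)..t, ∫ y in (0:ℝ)..Λ,
              (deriv (fun x => deriv (fun τ => ℓ x τ) s) y) ^ 2) := by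
  have smooth_deriv : ∀ {g : ℝ → ℝ}, ContDiff ℝ (⊤ : ℕ∞) g → ∀ y, HasDerivAt g (deriv g y) y :=
    fun hg y => (hg.differentiable (by simp) y).hasDerivAt
  have hy1 := pd_fst hreg
  have hy2 := pd_fst (f := fun y t => deriv (fun x => ℓ x t) y) hy1
  have ht1 := pd_snd hreg
  have hty := pd_fst (f := fun y t => deriv (fun s => ℓ y s) t) ht1
  set c := Λ ^ 2 * K with hc
  have hcpos : 0 < c := by positivity
  set α := Λ * K * a / (2 * a1) with hα
  have hαpos : 0 < α := by positivity
  have hΛ0 : ∀ t ≥ (0 : ℝ), ℓ Λ t = 0 := by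
    intro t ht
    have hcl : IsClosed {t : ℝ | ℓ Λ t = 0} :=
      isClosed_eq (slice_snd hreg Λ).continuous continuous_const
    have : closure (Ioi (0 : ℝ)) ⊆ {t : ℝ | ℓ Λ t = 0} :=
      hcl.closure_subset_iff.2 (fun t ht => hbcΛ t ht)
    rw [closure_Ioi] at this
    exact this ht
  have hpde' : ∀ t > (0 : ℝ), ∀ y ∈ Icc (0 : ℝ) Λ,
      c * deriv (fun x => deriv (fun x' => ℓ x' t) x) y = deriv (fun s => ℓ y s) t := by
    intro t ht y hy
    have hcl : IsClosed {y : ℝ | c * deriv (fun x => deriv (fun x' => ℓ x' t) x) y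
        = deriv (fun s => ℓ y s) t} :=
      isClosed_eq (continuous_const.mul
        (slice_fst (f := fun y t => deriv (fun x => deriv (fun x' => ℓ x' t) x) y) hy2 t).continuous)
        (slice_fst (f := fun y t => deriv (fun s => ℓ y s) t) ht1 t).continuous
    have := hcl.closure_subset_iff.2 (fun y hy => (hpde y hy t ht).symm)
    rw [closure_Ioo hΛ.ne] at this
    exact this hy
  have hwΛ : ∀ t > (0 : ℝ), deriv (fun s => ℓ Λ s) t = 0 := by
    intro t ht
    have : (fun s => ℓ Λ s) =ᶠ[nhds t] fun _ => 0 := by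
      filter_upwards [Ioi_mem_nhds ht] with s hs using hbcΛ s hs
    rw [this.deriv_eq]; simp
  refine ⟨5 + 9 * Λ ^ 2 / c, by positivity, ?_⟩
  intro N hN ℓd ℓ0h ℓh hdiff hode hode1 hodeN hV0 hinit hVh hnode t ht
  have hN' : (0 : ℝ) < N := by exact_mod_cast hN
  set h := Λ / N with hh
  have hpos : 0 < h := by positivity
  have hNh : N * h = Λ := by rw [hh]; field_simp
  -- nodal errors
  set x : ℕ → ℝ → ℝ := fun j s => ℓd (j + 1) s - ℓ (j * h) s with hx
  set xd : ℕ → ℝ → ℝ := fun j s => deriv (ℓd (j + 1)) s - deriv (fun τ => ℓ (j * h) τ) s with hxd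
  have hxder : ∀ j < N, ∀ s, HasDerivAt (x j) (xd j s) s := fun j hj s =>
    ((hdiff (j + 1) (by omega) (by omega)) s).hasDerivAt.sub
      (smooth_deriv (slice_snd hreg (j * h)) s)
  set E : ℝ → ℝ := fun s => ∑ j ∈ Finset.range N, h * x j s ^ 2 with hE
  have hEder : ∀ s, HasDerivAt E (2 * ∑ j ∈ Finset.range N, h * xd j s * x j s) s := by
    intro s
    have := HasDerivAt.fun_sum (u := Finset.range N) (A := fun j s => h * x j s ^ 2)
      (A' := fun j => h * (2 * x j s * xd j s)) (x := s) (fun j hj => by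
        have := ((hxder j (Finset.mem_range.1 hj) s).fun_pow 2).const_mul h
        exact this.congr_deriv (by simp))
    refine this.congr_deriv ?_
    rw [Finset.mul_sum]
    exact Finset.sum_congr rfl fun j _ => by ring
  set G : ℝ → ℝ := fun s => ∫ y in (0:ℝ)..Λ,
    (deriv (fun x => deriv (fun τ => ℓ x τ) s) y) ^ 2 with hG
  have hGc : Continuous G := by
    refine intervalIntegral.continuous_parametric_intervalIntegral_of_continuous' ?_ 0 Λ
    exact (hty.continuous.comp continuous_swap).pow 2
  have hG0 : ∀ s, 0 ≤ G s := fun s =>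
    intervalIntegral.integral_nonneg hΛ.le (fun _ _ => sq_nonneg _)
  have hEineq : ∀ s > 0, 2 * ∑ j ∈ Finset.range N, h * xd j s * x j s
      ≤ 9 / 2 * Λ ^ 2 / c * h ^ 2 * G s := by
    intro s hs
    set Q := ∫ y in (0:ℝ)..Λ, |deriv (fun x => deriv (fun τ => ℓ x τ) s) y| with hQ
    have hqc : Continuous (fun y => deriv (fun x => deriv (fun τ => ℓ x τ) s) y) :=
      (slice_fst (f := fun y s => deriv (fun x => deriv (fun τ => ℓ x τ) s) y) hty s).continuous
    have hQ2 : Q ^ 2 ≤ Λ * G s := by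
      have := cs_interval hΛ.le hqc
      simpa using this
    set u : ℝ → ℝ := fun y => ℓ y s with hu
    set w : ℝ → ℝ := fun y => deriv (fun τ => ℓ y τ) s with hw
    set R : ℕ → ℝ := fun j => match j with
      | 0 => h * w 0 - c * (u h - u 0) / h + c * deriv u 0
      | (j + 1) => h * w ((j + 1) * h) -
        c * (u (j * h) - 2 * u ((j + 1) * h) + u ((j + 2) * h)) / h with hR
    have hcons : ∑ j ∈ Finset.range N, |R j| ≤ 3 * h * Q :=
      consistency hN hΛ (u := u) (u' := deriv u) (u'' := deriv (deriv u)) (w := w)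
        (w' := deriv w) (c := c) (smooth_deriv (slice_fst hreg s))
        (smooth_deriv (slice_fst (f := fun y t => deriv (fun x => ℓ x t) y) hy1 s))
        (smooth_deriv (slice_fst (f := fun y t => deriv (fun s => ℓ y s) t) ht1 s))
        hqc (hpde' s hs) (hwΛ s hs) R rfl (fun j _ => rfl)
    have hen := energy_ineq hN hΛ hcpos hαpos.le (fun j => x j s) (fun j => xd j s) R
      (by simp only [hx]; rw [hodeN, hNh, hΛ0 s hs.le]; simp)
      (by
        have o := hode1 s
        have b := hbc0 s hs
        simp only [hx, hxd, hR, hu, hw, Nat.cast_zero, zero_mul, Nat.cast_one, one_mul, zero_add,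
          ← hh]
        have hαe : Λ * K * (a / (2 * a1)) = α := by rw [hα]; ring
        rw [hαe] at b
        rw [mul_sub, o]
        have e : (1 : ℕ) + 1 = 2 := rfl
        rw [e]
        have : c * (ℓd 2 s - ℓ h s - (ℓd 1 s - ℓ 0 s)) / h
            = c * (ℓd 2 s - ℓd 1 s) / h - c * (ℓ h s - ℓ 0 s) / h := by ring
        rw [this]
        linarith)
      (by
        intro j hj
        have o := hode (j + 2) (by omega) (by omega) s
        simp only [hx, hxd, hR, hu, hw, ← hh]
        have e1 : j + 2 - 1 = j + 1 := by omega
        have e2 : j + 1 + 1 = j + 2 := rfl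
        have e3 : j + 2 + 1 = j + 3 := rfl
        rw [e1, e3] at o
        rw [e2, e3, mul_sub, o]
        push_cast
        field_simp
        ring)
      hcons
    rw [← hh] at hen
    have : 9 / 4 * h ^ 2 * Q ^ 2 * Λ / c ≤ 9 / 4 * h ^ 2 * (Λ * G s) * Λ / c := by gcongr
    have e : 9 / 2 * Λ ^ 2 / c * h ^ 2 * G s = 2 * (9 / 4 * h ^ 2 * (Λ * G s) * Λ / c) := by ring
    rw [e]
    have hen' := hen.trans this
    linarith
  have hEt : E t ≤ E 0 + 9 / 2 * Λ ^ 2 / c * h ^ 2 * ∫ s in (0:ℝ)..t, G s := by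
    have hφ : ∀ s, HasDerivAt (fun s => E s - 9 / 2 * Λ ^ 2 / c * h ^ 2 * ∫ s in (0:ℝ)..s, G s)
        (2 * ∑ j ∈ Finset.range N, h * xd j s * x j s - 9 / 2 * Λ ^ 2 / c * h ^ 2 * G s) s :=
      fun s => (hEder s).sub ((intervalIntegral.integral_hasDerivAt_right
        (hGc.intervalIntegrable _ _) hGc.stronglyMeasurable.stronglyMeasurableAtFilter
        hGc.continuousAt).const_mul _)
    have hanti := antitoneOn_of_deriv_nonpos (convex_Ici (0 : ℝ))
      (f := fun s => E s - 9 / 2 * Λ ^ 2 / c * h ^ 2 * ∫ s in (0:ℝ)..s, G s)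
      (fun s _ => (hφ s).continuousAt.continuousWithinAt)
      (fun s _ => (hφ s).differentiableAt.differentiableWithinAt)
      (fun s hs => by
        rw [interior_Ici] at hs
        rw [(hφ s).deriv]
        linarith [hEineq s hs])
    have := hanti (mem_Ici.2 le_rfl) (mem_Ici.2 ht) ht
    simp only [intervalIntegral.integral_same, mul_zero, sub_zero] at this
    linarith
  have hcast : ∀ j : ℕ, ((j + 1 : ℕ) : ℝ) - 1 = j := fun j => by push_cast; ring
  have hc2 : ∀ s, Continuous (fun y => deriv (fun x => deriv (fun x' => ℓ x' s) x) y) := fun s =>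
    (slice_fst (f := fun y t => deriv (fun x => deriv (fun x' => ℓ x' t) x) y) hy2 s).continuous
  have g0 := (global_est hN hΛ (f := fun y => ℓ y 0) (smooth_deriv (slice_fst hreg 0))
    (smooth_deriv (slice_fst (f := fun y t => deriv (fun x => ℓ x t) y) hy1 0)) (hc2 0)
    hV0 (hΛ0 0 le_rfl) (fun j => x j 0) (fun j hj => by
      have := hinit (j + 1) (by omega) (by omega)
      rw [hcast] at this
      simp only [hx]; rw [this])).2
  have gt := (global_est hN hΛ (f := fun y => ℓ y t) (smooth_deriv (slice_fst hreg t))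
    (smooth_deriv (slice_fst (f := fun y t => deriv (fun x => ℓ x t) y) hy1 t)) (hc2 t)
    (hVh t) (hΛ0 t ht) (fun j => x j t) (fun j hj => by
      have := hnode (j + 1) (by omega) (by omega) t
      rw [hcast] at this
      simp only [hx]; rw [← this])).1
  rw [← hh] at g0 gt
  refine final_sqrt (intervalIntegral.integral_nonneg hΛ.le (fun _ _ => sq_nonneg _))
    (intervalIntegral.integral_nonneg hΛ.le (fun _ _ => sq_nonneg _))
    (intervalIntegral.integral_nonneg hΛ.le (fun _ _ => sq_nonneg _))
    (intervalIntegral.integral_nonneg ht (fun s _ => hG0 s)) hpos (by positivity) ?_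
  have hEt' : 2 * E t ≤ 2 * E 0 + 9 * Λ ^ 2 / c * h ^ 2 * ∫ s in (0:ℝ)..t, G s := by
    have : 9 * Λ ^ 2 / c * h ^ 2 * ∫ s in (0:ℝ)..t, G s
      = 2 * (9 / 2 * Λ ^ 2 / c * h ^ 2 * ∫ s in (0:ℝ)..t, G s) := by ring
    rw [this]; linarith
  refine gt.trans ?_
  have g0' : 2 * E 0 ≤ _ := mul_le_mul_of_nonneg_left g0 (by norm_num : (0:ℝ) ≤ 2)
  change 2 * E t + _ ≤ _
  have := add_le_add_left (hEt'.trans (add_le_add_left g0' _)) 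
    (2 * h ^ 4 * ∫ y in (0:ℝ)..Λ, (deriv (fun x => deriv (fun x' => ℓ x' t) x) y) ^ 2)
  refine this.trans (le_of_eq ?_)
  ring
end
end

section
/- Let ℓ be a classical solution of the continuous swimmer problem with initial data ℓ₀ ∈ H²(0,Λ), and for each N let ℓ_h be the piecewise affine function built from a solution of the N-spring ODE system with initial values ℓ_j(0) = ℓ_{0,h}(y_j), ℓ_{0,h} ∈ V_h. Then there exists a constant C > 0, independent of h, such that for all t ≥ 0: ‖∂_y(ℓ_h − ℓ)(·,t)‖ ≤ Ch(‖∂_{yy}ℓ₀‖ + ‖∂_{yy}ℓ(·,t)‖) + C‖∂_y(ℓ_{0,h} − ℓ₀)‖ + C√h (∫₀^t ‖∂_{yt}ℓ(·,s)‖² ds)^{1/2}, where ‖·‖ denotes the L²(0,Λ) norm. (Theorem 2: order-1/2 H¹ convergence of the discrete swimmer to the continuous one.) -/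
open MeasureTheory Set

noncomputable section

lemma aux_taylor_fwd (f f' f'' : ℝ → ℝ) (h1 : ∀ x, HasDerivAt f (f' x) x)
    (h2 : ∀ x, HasDerivAt f' (f'' x) x) (a b : ℝ) (hab : a < b) :
    ∃ η ∈ Ioo a b, f b = f a + (b - a) * f' a + (b - a) ^ 2 / 2 * f'' η := by
  have hba : b - a ≠ 0 := by linarith [sub_pos.mpr hab] |> fun h : 0 < b - a => h.ne'
  obtain ⟨κ, hκ⟩ : ∃ κ : ℝ, κ * (b - a) ^ 2 = f b - f a - (b - a) * f' a :=
    ⟨(f b - f a - (b - a) * f' a) / (b - a) ^ 2, by field_simp⟩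
  have hd : ∀ x, HasDerivAt (fun y => f b - f y - (b - y) * f' y - κ * (b - y) ^ 2)
      (-(b - x) * f'' x + 2 * κ * (b - x)) x := by
    intro x
    have hb : HasDerivAt (fun y : ℝ => b - y) (-1) x := by
      simpa using (hasDerivAt_id x).const_sub b
    have := (((h1 x).const_sub (f b)).sub (hb.mul (h2 x))).sub ((hb.pow 2).const_mul κ)
    refine this.congr_deriv ?_
    norm_num; ring
  obtain ⟨η, hη, h0⟩ := exists_hasDerivAt_eq_zero hab
    (f := fun y => f b - f y - (b - y) * f' y - κ * (b - y) ^ 2)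
    (f' := fun x => -(b - x) * f'' x + 2 * κ * (b - x))
    (fun x _ => (hd x).continuousAt.continuousWithinAt)
    (by simp; linarith) (fun x _ => hd x)
  refine ⟨η, hη, ?_⟩
  have hne : b - η ≠ 0 := (sub_pos.mpr hη.2).ne'
  have : f'' η = 2 * κ := by
    apply mul_left_cancel₀ hne
    linarith
  rw [this]; linarith

lemma aux_taylor_bwd (f f' f'' : ℝ → ℝ) (h1 : ∀ x, HasDerivAt f (f' x) x)
    (h2 : ∀ x, HasDerivAt f' (f'' x) x) (a b : ℝ) (hab : a < b) :
    ∃ η ∈ Ioo a b, f a = f b - (b - a) * f' b + (b - a) ^ 2 / 2 * f'' η := by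
  have hn : ∀ x : ℝ, HasDerivAt (fun y : ℝ => -y) (-1) x := fun x => hasDerivAt_neg x
  obtain ⟨η, hη, h⟩ := aux_taylor_fwd (fun x => f (-x)) (fun x => - f' (-x)) (fun x => f'' (-x))
    (fun x => ((h1 (-x)).comp x (hn x)).congr_deriv (by ring))
    (fun x => ((h2 (-x)).comp x (hn x)).neg.congr_deriv (by ring)) (-b) (-a) (by linarith)
  refine ⟨-η, ⟨by linarith [hη.2], by linarith [hη.1]⟩, ?_⟩
  simp only [neg_neg] at h
  rw [h]; ring

lemma aux_cs (g : ℝ → ℝ) (hg : Continuous g) (a b : ℝ) (hab : a ≤ b) :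
    (∫ x in a..b, g x) ^ 2 ≤ (b - a) * ∫ x in a..b, g x ^ 2 := by
  rcases hab.eq_or_lt with rfl | hab
  · simp
  have hpos : 0 < b - a := sub_pos.mpr hab
  set I := ∫ x in a..b, g x with hI
  have h0 : 0 ≤ ∫ x in a..b, (g x - I / (b - a)) ^ 2 :=
    intervalIntegral.integral_nonneg hab.le (fun x _ => sq_nonneg _)
  have h1 : ∫ x in a..b, (g x - I / (b - a)) ^ 2
      = (∫ x in a..b, g x ^ 2) - 2 * (I / (b - a)) * I + (I / (b - a)) ^ 2 * (b - a) := by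
    have e : ∀ x, (g x - I / (b - a)) ^ 2
        = (g x ^ 2 - 2 * (I / (b - a)) * g x) + (I / (b - a)) ^ 2 := fun x => by ring
    simp_rw [e]
    rw [intervalIntegral.integral_add, intervalIntegral.integral_sub,
      intervalIntegral.integral_const_mul, intervalIntegral.integral_const]
    · simp [hI]; ring
    all_goals exact Continuous.intervalIntegrable (by fun_prop) _ _
  rw [h1] at h0
  have h2 : (∫ x in a..b, g x ^ 2) - 2 * (I / (b - a)) * I + (I / (b - a)) ^ 2 * (b - a)
    = (∫ x in a..b, g x ^ 2) - I ^ 2 / (b - a) := by field_simp; ring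
  rw [h2, sub_nonneg, div_le_iff₀ hpos] at h0
  linarith

lemma aux_osc (g g' : ℝ → ℝ) (hd : ∀ x, HasDerivAt g (g' x) x) (hc : Continuous g')
    (a b x y : ℝ) (hx : x ∈ Icc a b) (hy : y ∈ Icc a b) :
    (g x - g y) ^ 2 ≤ (b - a) * ∫ z in a..b, g' z ^ 2 := by
  wlog hxy : y ≤ x generalizing x y
  · have := this y x hy hx (le_of_not_ge hxy)
    linarith [sq_abs (g x - g y), sub_sq_comm (g x) (g y)]
  have h1 : ∫ z in y..x, g' z = g x - g y :=
    intervalIntegral.integral_eq_sub_of_hasDerivAt (fun z _ => hd z) (hc.intervalIntegrable _ _)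
  rw [← h1]
  refine (aux_cs g' hc y x hxy).trans ?_
  have h2 : ∫ z in y..x, g' z ^ 2 ≤ ∫ z in a..b, g' z ^ 2 := by
    apply intervalIntegral.integral_mono_interval hy.1 hxy hx.2
    · exact Filter.Eventually.of_forall (fun z => sq_nonneg _)
    · exact Continuous.intervalIntegrable (by fun_prop) _ _
  have h3 : 0 ≤ ∫ z in y..x, g' z ^ 2 :=
    intervalIntegral.integral_nonneg hxy (fun z _ => sq_nonneg _)
  have := hy.1
  have := hx.2
  exact mul_le_mul (by linarith) h2 h3 (by linarith)

lemma aux_sum_cells (g : ℝ → ℝ) (hg : Continuous g) (h : ℝ) (N : ℕ) :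
    ∑ j ∈ Finset.range N, ∫ y in ((j : ℝ) * h)..((j : ℝ) + 1) * h, g y
      = ∫ y in (0 : ℝ)..(N * h), g y := by
  have := intervalIntegral.sum_integral_adjacent_intervals (f := g) (μ := volume)
    (a := fun k : ℕ => (k : ℝ) * h) (n := N) (fun k _ => hg.intervalIntegrable _ _)
  simpa using this

/-- One cell. -/
lemma aux_cell (v f f' f'' : ℝ → ℝ) (h1 : ∀ x, HasDerivAt f (f' x) x)
    (h2 : ∀ x, HasDerivAt f' (f'' x) x) (hc : Continuous f'') (p q A B : ℝ) (hpq : p < q)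
    (hv : ∀ y ∈ Icc p q, v y = A * y + B) :
    IntervalIntegrable (fun y => (deriv (fun x => v x - f x) y) ^ 2) volume p q ∧
    (((v q - f q) - (v p - f p)) ^ 2 / (q - p)
      ≤ ∫ y in p..q, (deriv (fun x => v x - f x) y) ^ 2) ∧
    (∫ y in p..q, (deriv (fun x => v x - f x) y) ^ 2)
      ≤ ((v q - f q) - (v p - f p)) ^ 2 / (q - p) + (q - p) ^ 2 * ∫ y in p..q, f'' y ^ 2 := by
  have hf'c : Continuous f' := continuous_iff_continuousAt.mpr fun x => (h2 x).continuousAt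
  have hpos : 0 < q - p := sub_pos.mpr hpq
  have hder : ∀ y ∈ Ioo p q, deriv (fun x => v x - f x) y = A - f' y := by
    intro y hy
    have hva : HasDerivAt v A y := by
      have : HasDerivAt (fun x => A * x + B) A y := by
        simpa using ((hasDerivAt_id y).const_mul A).add_const B
      refine this.congr_of_eventuallyEq ?_
      filter_upwards [Icc_mem_nhds hy.1 hy.2] with x hx using hv x hx
    exact (hva.sub (h1 y)).deriv
  have hae : ∀ᵐ y ∂(volume : Measure ℝ), y ∈ Set.uIoc p q →
      (A - f' y) ^ 2 = (deriv (fun x => v x - f x) y) ^ 2 := by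
    have : ∀ᵐ y ∂(volume : Measure ℝ), y ≠ q := by
      simp [ae_iff]
    filter_upwards [this] with y hy hm
    rw [uIoc_of_le hpq.le] at hm
    rw [hder y ⟨hm.1, lt_of_le_of_ne hm.2 hy⟩]
  have hint : IntervalIntegrable (fun y => (A - f' y) ^ 2) volume p q :=
    Continuous.intervalIntegrable (by fun_prop) _ _
  have hval : ∫ y in p..q, (deriv (fun x => v x - f x) y) ^ 2 = ∫ y in p..q, (A - f' y) ^ 2 :=
    (intervalIntegral.integral_congr_ae hae).symm
  have hvd : v q - v p = A * (q - p) := by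
    rw [hv q ⟨hpq.le, le_rfl⟩, hv p ⟨le_rfl, hpq.le⟩]; ring
  have hfd : ∫ y in p..q, f' y = f q - f p :=
    intervalIntegral.integral_eq_sub_of_hasDerivAt (fun z _ => h1 z) (hf'c.intervalIntegrable _ _)
  set m := (f q - f p) / (q - p) with hm
  have hmm : f q - f p = m * (q - p) := by rw [hm]; field_simp
  have hdec : ∫ y in p..q, (A - f' y) ^ 2
      = ((v q - f q) - (v p - f p)) ^ 2 / (q - p) + ∫ y in p..q, (m - f' y) ^ 2 := by
    have e : ∀ y, (A - f' y) ^ 2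
        = ((A ^ 2 - m ^ 2) - 2 * (A - m) * f' y) + (m - f' y) ^ 2 := fun y => by ring
    simp_rw [e]
    rw [intervalIntegral.integral_add, intervalIntegral.integral_sub,
      intervalIntegral.integral_const_mul, intervalIntegral.integral_const, hfd]
    · have : (v q - f q) - (v p - f p) = (A - m) * (q - p) := by linarith
      rw [this, hmm]
      simp; field_simp; ring
    all_goals exact Continuous.intervalIntegrable (by fun_prop) _ _
  have hlow : 0 ≤ ∫ y in p..q, (m - f' y) ^ 2 :=
    intervalIntegral.integral_nonneg hpq.le (fun x _ => sq_nonneg _)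
  obtain ⟨ξ, hξ, hξm⟩ := exists_hasDerivAt_eq_slope f f' hpq
    (fun x _ => (h1 x).continuousAt.continuousWithinAt) (fun x _ => h1 x)
  have hup : ∫ y in p..q, (m - f' y) ^ 2 ≤ (q - p) ^ 2 * ∫ y in p..q, f'' y ^ 2 := by
    have : ∫ y in p..q, (m - f' y) ^ 2 ≤ ∫ y in p..q, (q - p) * ∫ z in p..q, f'' z ^ 2 := by
      apply intervalIntegral.integral_mono_on hpq.le
      · exact Continuous.intervalIntegrable (by fun_prop) _ _
      · exact Continuous.intervalIntegrable (by fun_prop) _ _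
      · intro y hy
        rw [hm, ← hξm]
        exact aux_osc f' f'' h2 hc p q ξ y ⟨hξ.1.le, hξ.2.le⟩ hy
    refine this.trans (le_of_eq ?_)
    rw [intervalIntegral.integral_const]
    simp; ring
  refine ⟨hint.congr_ae ?_, ?_, ?_⟩
  · exact (ae_restrict_iff' measurableSet_uIoc).mpr hae
  · rw [hval, hdec]; linarith
  · rw [hval, hdec]; linarith

lemma aux_global (Λ : ℝ) (hΛ : 0 < Λ) (N : ℕ) (hN : 0 < N) (v f f' f'' : ℝ → ℝ)
    (h1 : ∀ x, HasDerivAt f (f' x) x)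
    (h2 : ∀ x, HasDerivAt f' (f'' x) x) (hc : Continuous f'') (hv : IsVh Λ N v)
    (w : ℕ → ℝ) (hw : ∀ j ≤ N, w j = v (j * (Λ / N)) - f (j * (Λ / N))) :
    (∑ j ∈ Finset.range N, (w (j + 1) - w j) ^ 2 / (Λ / N)
      ≤ ∫ y in (0 : ℝ)..Λ, (deriv (fun x => v x - f x) y) ^ 2) ∧
    (∫ y in (0 : ℝ)..Λ, (deriv (fun x => v x - f x) y) ^ 2)
      ≤ ∑ j ∈ Finset.range N, (w (j + 1) - w j) ^ 2 / (Λ / N)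
        + (Λ / N) ^ 2 * ∫ y in (0 : ℝ)..Λ, f'' y ^ 2 := by
  have hNr : (0 : ℝ) < N := by exact_mod_cast hN
  set h := Λ / N with hh
  have hpos : 0 < h := by positivity
  have hNh : (N : ℝ) * h = Λ := by rw [hh]; field_simp
  choose! A B hAB using hv.2.1
  have key := fun (j : ℕ) (hj : j < N) =>
    aux_cell v f f' f'' h1 h2 hc (j * h) ((j + 1) * h) (A j) (B j) (by nlinarith) (hAB j hj)
  have hlen : ∀ j : ℕ, ((j : ℝ) + 1) * h - j * h = h := fun j => by ring
  have hww : ∀ j < N, (v (((j : ℝ) + 1) * h) - f (((j : ℝ) + 1) * h)) - (v (j * h) - f (j * h))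
      = w (j + 1) - w j := by
    intro j hj
    rw [hw (j + 1) hj, hw j hj.le]; push_cast; rfl
  have hsum : ∑ j ∈ Finset.range N, ∫ y in ((j : ℝ) * h)..((j : ℝ) + 1) * h,
      (deriv (fun x => v x - f x) y) ^ 2
      = ∫ y in (0 : ℝ)..Λ, (deriv (fun x => v x - f x) y) ^ 2 := by
    have := intervalIntegral.sum_integral_adjacent_intervals
      (f := fun y => (deriv (fun x => v x - f x) y) ^ 2) (μ := volume)
      (a := fun k : ℕ => (k : ℝ) * h) (n := N) (fun k hk => by
        simpa using (key k hk).1)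
    simpa [hNh] using this
  rw [← hsum]
  constructor
  · apply Finset.sum_le_sum
    intro j hj
    have := (key j (Finset.mem_range.mp hj)).2.1
    rwa [hww j (Finset.mem_range.mp hj), hlen] at this
  · have h3 : ∫ y in (0 : ℝ)..Λ, f'' y ^ 2
        = ∑ j ∈ Finset.range N, ∫ y in ((j : ℝ) * h)..((j : ℝ) + 1) * h, f'' y ^ 2 := by
      rw [aux_sum_cells _ (by fun_prop), hNh]
    rw [h3, Finset.mul_sum, ← Finset.sum_add_distrib]
    apply Finset.sum_le_sum
    intro j hj
    have := (key j (Finset.mem_range.mp hj)).2.2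
    rwa [hww j (Finset.mem_range.mp hj), hlen] at this

/-- Smoothness of partial derivatives. -/
lemma aux_partial_t (F : ℝ → ℝ → ℝ) (hF : ContDiff ℝ (⊤ : ℕ∞) (fun p : ℝ × ℝ => F p.1 p.2)) :
    ContDiff ℝ (⊤ : ℕ∞) (fun p : ℝ × ℝ => deriv (fun τ => F p.1 τ) p.2) ∧
    ∀ y t, HasDerivAt (fun τ => F y τ) (deriv (fun τ => F y τ) t) t := by
  have hd : ∀ y t, HasDerivAt (fun τ => F y τ)
      (fderiv ℝ (fun p : ℝ × ℝ => F p.1 p.2) (y, t) (0, 1)) t := by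
    intro y t
    have h1 := (hF.differentiable (by simp) (y, t)).hasFDerivAt
    have h2 : HasDerivAt (fun τ : ℝ => ((y, τ) : ℝ × ℝ)) (0, 1) t :=
      (hasDerivAt_const t y).prodMk (hasDerivAt_id t)
    exact h1.comp_hasDerivAt t h2
  refine ⟨?_, fun y t => (hd y t).differentiableAt.hasDerivAt⟩
  have : (fun p : ℝ × ℝ => deriv (fun τ => F p.1 τ) p.2)
      = fun p => fderiv ℝ (fun p : ℝ × ℝ => F p.1 p.2) p (0, 1) := by
    ext p; exact (hd p.1 p.2).deriv
  rw [this]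
  exact (hF.fderiv_right (m := (⊤ : ℕ∞)) (by simp)).clm_apply contDiff_const

lemma aux_partial_y (F : ℝ → ℝ → ℝ) (hF : ContDiff ℝ (⊤ : ℕ∞) (fun p : ℝ × ℝ => F p.1 p.2)) :
    ContDiff ℝ (⊤ : ℕ∞) (fun p : ℝ × ℝ => deriv (fun x => F x p.2) p.1) ∧
    ∀ y t, HasDerivAt (fun x => F x t) (deriv (fun x => F x t) y) y := by
  have hs : ContDiff ℝ (⊤ : ℕ∞) (fun p : ℝ × ℝ => (p.2, p.1)) := contDiff_snd.prodMk contDiff_fst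
  have := aux_partial_t (fun t y => F y t) (hF.comp hs)
  exact ⟨this.1.comp hs, fun y t => this.2 t y⟩

lemma aux_resid (Λ D : ℝ) (hΛ : 0 < Λ) (N : ℕ) (hN : 0 < N) (f f' f'' g g' : ℝ → ℝ)
    (h1 : ∀ x, HasDerivAt f (f' x) x) (h2 : ∀ x, HasDerivAt f' (f'' x) x)
    (h3 : ∀ x, HasDerivAt g (g' x) x) (hc : Continuous g')
    (hg : ∀ y ∈ Ioo 0 Λ, g y = D * f'' y) (hgΛ : g Λ = 0) (q : ℕ → ℝ) (hq0 : q 0 = D * f' 0)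
    (hq : ∀ j < N, q (j + 1) = D * (f ((j + 1 : ℕ) * (Λ / N)) - f (j * (Λ / N))) / (Λ / N)) :
    ∑ j ∈ Finset.range N, (q (j + 1) - q j - (Λ / N) * g (j * (Λ / N))) ^ 2
      ≤ 2 * (Λ / N) ^ 2 * Λ * ∫ y in (0 : ℝ)..Λ, g' y ^ 2 := by
  have hNr : (0 : ℝ) < N := by exact_mod_cast hN
  have hN1 : (1 : ℝ) ≤ N := by exact_mod_cast hN
  set h := Λ / N with hh
  have hpos : 0 < h := by positivity
  have hNh : (N : ℝ) * h = Λ := by rw [hh]; field_simp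
  have hhΛ : h ≤ Λ := by nlinarith
  set I := ∫ y in (0 : ℝ)..Λ, g' y ^ 2 with hI
  have hI0 : 0 ≤ I := intervalIntegral.integral_nonneg hΛ.le (fun x _ => sq_nonneg _)
  set J : ℕ → ℝ := fun j => ∫ y in ((j : ℝ) * h)..((j : ℝ) + 1) * h, g' y ^ 2 with hJ
  have hJ0 : ∀ j, 0 ≤ J j := fun j =>
    intervalIntegral.integral_nonneg (by nlinarith) (fun x _ => sq_nonneg _)
  have hJs : ∑ j ∈ Finset.range N, J j = I := by
    rw [hI, ← hNh]; exact aux_sum_cells _ (by fun_prop) h N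
  have hcell : ∀ j < N, ∀ y ∈ Ioo ((j : ℝ) * h) (((j : ℝ) + 1) * h), y ∈ Ioo 0 Λ := by
    intro j hj y hy
    have hj' : (j : ℝ) + 1 ≤ N := by exact_mod_cast hj
    have hj0 : (0 : ℝ) ≤ j := Nat.cast_nonneg j
    constructor
    · have := hy.1; nlinarith [mul_nonneg hj0 hpos.le]
    · have := hy.2; nlinarith
  have hlen : ∀ j : ℕ, ((j : ℝ) + 1) * h - j * h = h := fun j => by ring
  have hlt : ∀ j : ℕ, (j : ℝ) * h < ((j : ℝ) + 1) * h := fun j => by nlinarith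
  -- forward and backward expansions of the discrete flux
  have fwd : ∀ j < N, ∃ η ∈ Ioo ((j : ℝ) * h) (((j : ℝ) + 1) * h),
      q (j + 1) = D * f' (j * h) + h / 2 * g η := by
    intro j hj
    obtain ⟨η, hη, hT⟩ := aux_taylor_fwd f f' f'' h1 h2 (j * h) ((j + 1) * h) (hlt j)
    refine ⟨η, hη, ?_⟩
    rw [hq j hj, hg η (hcell j hj η hη)]
    push_cast
    rw [hT, hlen]; field_simp; ring
  have bwd : ∀ j < N, ∃ η ∈ Ioo ((j : ℝ) * h) (((j : ℝ) + 1) * h),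
      q (j + 1) = D * f' (((j : ℝ) + 1) * h) - h / 2 * g η := by
    intro j hj
    obtain ⟨η, hη, hT⟩ := aux_taylor_bwd f f' f'' h1 h2 (j * h) ((j + 1) * h) (hlt j)
    refine ⟨η, hη, ?_⟩
    rw [hq j hj, hg η (hcell j hj η hη)]
    push_cast
    rw [hT, hlen]; field_simp; ring
  have r0 : (q 1 - q 0 - h * g (0 * h)) ^ 2 ≤ h ^ 2 / 2 * (Λ * I) + h ^ 3 / 2 * I := by
    obtain ⟨η, hη, hT⟩ := fwd 0 hN
    have hηΛ := hcell 0 hN η hη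
    simp only [Nat.cast_zero, zero_mul, zero_add] at hT
    rw [hT, hq0, zero_mul]
    have a1 := aux_osc g g' h3 hc 0 Λ 0 Λ ⟨le_rfl, hΛ.le⟩ ⟨hΛ.le, le_rfl⟩
    have hη' : η ∈ Icc 0 h := by
      have := hη.1; have := hη.2
      simp at *
      constructor <;> linarith
    have a2 := aux_osc g g' h3 hc 0 h η 0 hη' ⟨le_rfl, hpos.le⟩
    have a3 : ∫ z in (0:ℝ)..h, g' z ^ 2 ≤ I := by
      apply intervalIntegral.integral_mono_interval le_rfl hpos.le hhΛ
      · exact Filter.Eventually.of_forall (fun z => sq_nonneg _)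
      · exact Continuous.intervalIntegrable (by fun_prop) _ _
    rw [hgΛ, ← hI] at a1
    simp only [sub_zero] at a1 a2
    have a4 : (g η - g 0) ^ 2 ≤ h * I := a2.trans (mul_le_mul_of_nonneg_left a3 hpos.le)
    have e : (D * f' 0 + h / 2 * g η - D * f' 0 - h * g 0) ^ 2
        = h ^ 2 / 4 * ((g η - g 0) - g 0) ^ 2 := by ring
    rw [e]
    have a5 : ((g η - g 0) - g 0) ^ 2 ≤ 2 * (h * I) + 2 * (Λ * I) := by
      nlinarith [sq_nonneg ((g η - g 0) + g 0)]
    calc h ^ 2 / 4 * ((g η - g 0) - g 0) ^ 2 ≤ h ^ 2 / 4 * (2 * (h * I) + 2 * (Λ * I)) :=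
          mul_le_mul_of_nonneg_left a5 (by positivity)
      _ = _ := by ring
  have rj : ∀ j, j + 1 < N → (q (j + 1 + 1) - q (j + 1) - h * g ((j + 1 : ℕ) * h)) ^ 2
      ≤ h ^ 3 / 2 * (J (j + 1) + J j) := by
    intro j hj
    obtain ⟨η, hη, hT⟩ := fwd (j + 1) hj
    obtain ⟨ζ, hζ, hS⟩ := bwd j (by omega)
    have a1 := aux_osc g g' h3 hc _ _ η (((j + 1 : ℕ) : ℝ) * h) ⟨hη.1.le, hη.2.le⟩
      ⟨le_rfl, (hlt (j + 1)).le⟩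
    have a2 := aux_osc g g' h3 hc _ _ ζ (((j : ℝ) + 1) * h) ⟨hζ.1.le, hζ.2.le⟩
      ⟨(hlt j).le, le_rfl⟩
    rw [hlen] at a1 a2
    rw [hT, hS]
    change _ ≤ h * J (j + 1) at a1
    change _ ≤ h * J j at a2
    push_cast at a1 ⊢
    set z := g (((j : ℝ) + 1) * h)
    have e : (D * f' (((j : ℝ) + 1) * h) + h / 2 * g η
        - (D * f' (((j : ℝ) + 1) * h) - h / 2 * g ζ) - h * z) ^ 2
        = h ^ 2 / 4 * ((g η - z) + (g ζ - z)) ^ 2 := by ring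
    rw [e]
    have a5 : ((g η - z) + (g ζ - z)) ^ 2 ≤ 2 * (h * J (j + 1)) + 2 * (h * J j) := by
      nlinarith [sq_nonneg ((g η - z) - (g ζ - z))]
    calc h ^ 2 / 4 * ((g η - z) + (g ζ - z)) ^ 2
        ≤ h ^ 2 / 4 * (2 * (h * J (j + 1)) + 2 * (h * J j)) :=
          mul_le_mul_of_nonneg_left a5 (by positivity)
      _ = _ := by ring
  obtain ⟨n, rfl⟩ : ∃ n, N = n + 1 := ⟨N - 1, by omega⟩
  rw [Finset.sum_range_succ']
  have s1 : ∑ j ∈ Finset.range n, (q (j + 1 + 1) - q (j + 1) - h * g ((j + 1 : ℕ) * h)) ^ 2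
      ≤ ∑ j ∈ Finset.range n, h ^ 3 / 2 * (J (j + 1) + J j) :=
    Finset.sum_le_sum fun j hj => rj j (by have := Finset.mem_range.mp hj; omega)
  rw [← Finset.mul_sum, Finset.sum_add_distrib] at s1
  have s2 : ∑ j ∈ Finset.range n, J (j + 1) ≤ I := by
    rw [← hJs, Finset.sum_range_succ']; linarith [hJ0 0]
  have s3 : ∑ j ∈ Finset.range n, J j ≤ I := by
    rw [← hJs, Finset.sum_range_succ]; linarith [hJ0 n]
  have s4 : h ^ 3 / 2 * (∑ j ∈ Finset.range n, J (j + 1) + ∑ j ∈ Finset.range n, J j)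
      ≤ h ^ 3 / 2 * (I + I) := mul_le_mul_of_nonneg_left (by linarith) (by positivity)
  have s5 : h ^ 3 * I ≤ h ^ 2 * Λ * I := by
    have : h ^ 3 = h ^ 2 * h := by ring
    rw [this]; gcongr
  simp only [Nat.cast_zero, zero_add] at r0 ⊢
  nlinarith

lemma aux_energy_alg (N : ℕ) (h : ℝ) (hpos : 0 < h) (x p r : ℕ → ℝ) (hx : x N = 0)
    (he : ∀ j < N, h * x j = p (j + 1) - p j + r j) :
    2 * (∑ j ∈ Finset.range N, p (j + 1) * (x (j + 1) - x j) + p 0 * x 0)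
      ≤ (∑ j ∈ Finset.range N, r j ^ 2) / (2 * h) := by
  have tel : ∑ j ∈ Finset.range N, (p (j + 1) * x (j + 1) - p j * x j) = p N * x N - p 0 * x 0 :=
    Finset.sum_range_sub (fun j => p j * x j) N
  have e : ∑ j ∈ Finset.range N, p (j + 1) * (x (j + 1) - x j)
      = ∑ j ∈ Finset.range N, (p (j + 1) * x (j + 1) - p j * x j)
        + ∑ j ∈ Finset.range N, (r j - h * x j) * x j := by
    rw [← Finset.sum_add_distrib]
    apply Finset.sum_congr rfl
    intro j hj
    rw [he j (Finset.mem_range.mp hj)]; ring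
  have b : ∑ j ∈ Finset.range N, (r j - h * x j) * x j
      ≤ ∑ j ∈ Finset.range N, r j ^ 2 / (4 * h) := by
    apply Finset.sum_le_sum
    intro j _
    rw [le_div_iff₀ (by positivity)]
    nlinarith [sq_nonneg (r j - 2 * (h * x j))]
  rw [e, tel, hx]
  rw [← Finset.sum_div] at b
  have : (∑ j ∈ Finset.range N, r j ^ 2) / (2 * h)
      = 2 * ((∑ j ∈ Finset.range N, r j ^ 2) / (4 * h)) := by field_simp; ring
  rw [this]; linarith

lemma aux_first_sq (N : ℕ) (hN : 0 < N) (Λ : ℝ) (hΛ : 0 < Λ) (w : ℕ → ℝ) (hw : w N = 0) :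
    w 0 ^ 2 ≤ Λ * ∑ j ∈ Finset.range N, (w (j + 1) - w j) ^ 2 / (Λ / N) := by
  have hNr : (0 : ℝ) < N := by exact_mod_cast hN
  have tel : ∑ j ∈ Finset.range N, (w (j + 1) - w j) = w N - w 0 := Finset.sum_range_sub w N
  have cs := sq_sum_le_card_mul_sum_sq (s := Finset.range N) (f := fun j => w (j + 1) - w j)
  rw [tel, hw, Finset.card_range] at cs
  rw [← Finset.sum_div]
  have : Λ * ((∑ j ∈ Finset.range N, (w (j + 1) - w j) ^ 2) / (Λ / N))
      = N * ∑ j ∈ Finset.range N, (w (j + 1) - w j) ^ 2 := by field_simp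
  rw [this]; linarith

/-- Theorem 2 (order-1/2 `H¹` convergence of the discrete swimmer to the
continuous one). In the same setting as Theorem 1, there is `C > 0`,
independent of `h = Λ/N`, such that for all `t ≥ 0`:
`‖∂_y(ℓh − ℓ)(·,t)‖ ≤ Ch(‖∂_{yy}ℓ₀‖ + ‖∂_{yy}ℓ(·,t)‖) + C‖∂_y(ℓ_{0,h} − ℓ₀)‖
  + C√h(∫₀^t ‖∂_{yt}ℓ(·,s)‖² ds)^{1/2}`. -/
theorem discrete_to_continuous_H1_convergence (Λ K a a1 : ℝ)
    (hΛ : 0 < Λ) (hK : 0 < K) (ha : 0 < a) (ha1 : 0 < a1)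
    (L0 : ℝ → ℝ) (hL0 : ContDiff ℝ (⊤ : ℕ∞) L0)
    (ℓ : ℝ → ℝ → ℝ)
    (hreg : ContDiff ℝ (⊤ : ℕ∞) (fun p : ℝ × ℝ => ℓ p.1 p.2))
    (hpde : ∀ y ∈ Set.Ioo (0 : ℝ) Λ, ∀ t > (0 : ℝ),
      deriv (fun s => ℓ y s) t =
        Λ ^ 2 * K * deriv (fun x => deriv (fun x' => ℓ x' t) x) y)
    (hbc0 : ∀ t > (0 : ℝ),
      Λ ^ 2 * K * deriv (fun x => ℓ x t) 0 - Λ * K * (a / (2 * a1)) * ℓ 0 t =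
        (Λ / 2) * deriv L0 t)
    (hbcΛ : ∀ t > (0 : ℝ), ℓ Λ t = 0) :
    ∃ C > 0, ∀ N : ℕ, 0 < N →
      ∀ (ℓd : ℕ → ℝ → ℝ) (ℓ0h : ℝ → ℝ) (ℓh : ℝ → ℝ → ℝ),
      (∀ j : ℕ, 1 ≤ j → j ≤ N → Differentiable ℝ (ℓd j)) →
      (∀ j : ℕ, 2 ≤ j → j ≤ N → ∀ t : ℝ,
        deriv (ℓd j) t =
          Λ ^ 2 * K * (ℓd (j - 1) t - 2 * ℓd j t + ℓd (j + 1) t) / (Λ / N) ^ 2) →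
      (∀ t : ℝ, (Λ / N) * deriv (ℓd 1) t =
        Λ ^ 2 * K * (ℓd 2 t - ℓd 1 t) / (Λ / N) - (Λ * K * a / (2 * a1)) * ℓd 1 t -
          (Λ / 2) * deriv L0 t) →
      (∀ t : ℝ, ℓd (N + 1) t = 0) →
      IsVh Λ N ℓ0h →
      (∀ j : ℕ, 1 ≤ j → j ≤ N + 1 → ℓd j 0 = ℓ0h (((j : ℝ) - 1) * (Λ / N))) →
      (∀ t : ℝ, IsVh Λ N (fun y => ℓh y t)) →
      (∀ j : ℕ, 1 ≤ j → j ≤ N + 1 → ∀ t : ℝ,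
        ℓh (((j : ℝ) - 1) * (Λ / N)) t = ℓd j t) →
      ∀ t ≥ (0 : ℝ),
        Real.sqrt (∫ y in (0:ℝ)..Λ, (deriv (fun x => ℓh x t - ℓ x t) y) ^ 2) ≤
          C * (Λ / N) *
            (Real.sqrt (∫ y in (0:ℝ)..Λ,
                (deriv (fun x => deriv (fun x' => ℓ x' 0) x) y) ^ 2) +
              Real.sqrt (∫ y in (0:ℝ)..Λ,
                (deriv (fun x => deriv (fun x' => ℓ x' t) x) y) ^ 2)) +
          C * Real.sqrt (∫ y in (0:ℝ)..Λ, (deriv (fun x => ℓ0h x - ℓ x 0) y) ^ 2) +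
          C * Real.sqrt (Λ / N) *
            Real.sqrt (∫ s in (0:ℝ)..t, ∫ y in (0:ℝ)..Λ,
              (deriv (fun x => deriv (fun τ => ℓ x τ) s) y) ^ 2) := by
  -- regularity of the partial derivatives
  obtain ⟨hyC, hyD⟩ := aux_partial_y ℓ hreg
  obtain ⟨hyyC, hyyD⟩ := aux_partial_y (fun x t => deriv (fun x' => ℓ x' t) x) hyC
  obtain ⟨htC, htD⟩ := aux_partial_t ℓ hreg
  obtain ⟨hytC, hytD⟩ := aux_partial_y (fun x s => deriv (fun τ => ℓ x τ) s) htC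
  have hyycont : ∀ t, Continuous fun y => deriv (fun x => deriv (fun x' => ℓ x' t) x) y :=
    fun t => hyyC.continuous.comp (continuous_id.prodMk continuous_const)
  have hytcont : ∀ s, Continuous fun y => deriv (fun x => deriv (fun τ => ℓ x τ) s) y :=
    fun s => hytC.continuous.comp (continuous_id.prodMk continuous_const)
  set I : ℝ → ℝ := fun s => ∫ y in (0:ℝ)..Λ, (deriv (fun x => deriv (fun τ => ℓ x τ) s) y) ^ 2
    with hI
  have hIc : Continuous I := by
    apply intervalIntegral.continuous_parametric_intervalIntegral_of_continuous'
    have hs : Continuous (fun p : ℝ × ℝ => (p.2, p.1)) := continuous_snd.prodMk continuous_fst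
    exact (hytC.continuous.comp hs).pow 2
  have hI0 : ∀ s, 0 ≤ I s := fun s =>
    intervalIntegral.integral_nonneg hΛ.le (fun x _ => sq_nonneg _)
  have hcontt : ∀ y, Continuous (ℓ y) := fun y =>
    continuous_iff_continuousAt.mpr fun s => (htD y s).continuousAt
  -- boundary value extends to time zero
  have hbcΛ' : ∀ t ≥ (0 : ℝ), ℓ Λ t = 0 := by
    intro t ht
    have hcl : closure (Ioi (0 : ℝ)) ⊆ {t | ℓ Λ t = 0} :=
      closure_minimal (fun t ht => hbcΛ t ht) (isClosed_eq (hcontt Λ) continuous_const)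
    rw [closure_Ioi] at hcl
    exact hcl ht
  have hgΛ : ∀ s > (0 : ℝ), deriv (fun τ => ℓ Λ τ) s = 0 := by
    intro s hs
    have : (fun τ => ℓ Λ τ) =ᶠ[nhds s] fun _ => (0 : ℝ) := by
      filter_upwards [Ioi_mem_nhds hs] with τ hτ using hbcΛ τ hτ
    rw [this.deriv_eq]; simp
  set D := Λ ^ 2 * K with hD
  have hDpos : 0 < D := by positivity
  set β := Λ * K * a / (2 * a1) with hβ
  have hβpos : 0 < β := by positivity
  have hC1 : 1 ≤ 1 + β * Λ / D + Λ / D := by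
    have : 0 < β * Λ / D := by positivity
    have : 0 < Λ / D := by positivity
    linarith
  refine ⟨1 + β * Λ / D + Λ / D, by linarith, ?_⟩
  intro N hN ℓd ℓ0h ℓh hdiff hode hode1 hodeN hV0 hinit hVh hnode t ht
  have hNr : (0 : ℝ) < N := by exact_mod_cast hN
  set h := Λ / N with hh
  have hpos : 0 < h := by positivity
  have hNh : (N : ℝ) * h = Λ := by rw [hh]; field_simp
  set e : ℕ → ℝ → ℝ := fun j s => ℓd (j + 1) s - ℓ (j * h) s with he
  have heN : ∀ s ≥ (0 : ℝ), e N s = 0 := by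
    intro s hs
    simp only [he, hNh, hodeN, hbcΛ' s hs, sub_zero]
  have hdd : ∀ j ≤ N, ∀ s, HasDerivAt (ℓd (j + 1)) (deriv (ℓd (j + 1)) s) s := by
    intro j hj s
    rcases hj.eq_or_lt with rfl | hj
    · have : ℓd (j + 1) = fun _ => 0 := funext hodeN
      rw [this]; simpa using hasDerivAt_const s (0 : ℝ)
    · exact (hdiff (j + 1) (by omega) (by omega) s).hasDerivAt
  set x : ℕ → ℝ → ℝ := fun j s => deriv (ℓd (j + 1)) s - deriv (fun τ => ℓ (j * h) τ) s with hx
  have hed : ∀ j ≤ N, ∀ s, HasDerivAt (e j) (x j s) s := fun j hj s =>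
    (hdd j hj s).sub (htD (j * h) s)
  set E : ℝ → ℝ := fun s => ∑ j ∈ Finset.range N, D / h * (e (j + 1) s - e j s) ^ 2
    + β * e 0 s ^ 2 with hE
  have hEd : ∀ s, HasDerivAt E (2 * (∑ j ∈ Finset.range N,
      (D / h * (e (j + 1) s - e j s)) * (x (j + 1) s - x j s) + (β * e 0 s) * x 0 s)) s := by
    intro s
    have h1 : HasDerivAt (fun s => ∑ j ∈ Finset.range N, D / h * (e (j + 1) s - e j s) ^ 2)
        (∑ j ∈ Finset.range N,
          2 * ((D / h * (e (j + 1) s - e j s)) * (x (j + 1) s - x j s))) s := by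
      apply HasDerivAt.fun_sum
      intro j hj
      have hj := Finset.mem_range.mp hj
      refine ((((hed (j + 1) hj s).sub (hed j hj.le s)).pow 2).const_mul (D / h)).congr_deriv ?_
      simp; ring
    have h2 : HasDerivAt (fun s => β * e 0 s ^ 2) (2 * ((β * e 0 s) * x 0 s)) s := by
      refine (((hed 0 hN.le s).pow 2).const_mul β).congr_deriv ?_
      simp; ring
    refine (h1.add h2).congr_deriv ?_
    rw [← Finset.mul_sum]; ring
  -- differential inequality
  have hEle : ∀ s > (0 : ℝ), 2 * (∑ j ∈ Finset.range N,
      (D / h * (e (j + 1) s - e j s)) * (x (j + 1) s - x j s) + (β * e 0 s) * x 0 s)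
      ≤ h * Λ * I s := by
    intro s hs
    set p : ℕ → ℝ := fun j => Nat.casesOn j (β * e 0 s)
      (fun i => D / h * (e (i + 1) s - e i s)) with hp
    set q : ℕ → ℝ := fun j => Nat.casesOn j (D * deriv (fun x => ℓ x s) 0)
      (fun i => D * (ℓ ((i + 1 : ℕ) * h) s - ℓ (i * h) s) / h) with hq
    set r : ℕ → ℝ := fun j => q (j + 1) - q j - h * deriv (fun τ => ℓ (j * h) τ) s with hr
    have A := aux_energy_alg N h hpos (fun j => x j s) p r (by
      simp only [hx, hNh, hgΛ s hs, sub_zero]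
      have : ℓd (N + 1) = fun _ => 0 := funext hodeN
      rw [this]; simp) (by
      intro j hj
      rcases j with _ | j
      · have o := hode1 s
        have b := hbc0 s hs
        have hb' : Λ * K * (a / (2 * a1)) = β := by rw [hβ]; ring
        rw [hb'] at b
        have p0 : p 0 = β * e 0 s := rfl
        have p1 : p (0 + 1) = D / h * (e (0 + 1) s - e 0 s) := rfl
        have q0 : q 0 = D * deriv (fun x => ℓ x s) 0 := rfl
        have q1 : q (0 + 1) = D * (ℓ ((0 + 1 : ℕ) * h) s - ℓ ((0 : ℕ) * h) s) / h := rfl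
        simp only [hr]
        rw [p0, p1, q0, q1]
        simp only [hx, he]
        simp only [Nat.cast_zero, zero_mul, zero_add]
        rw [mul_sub, o]
        have b' : D * deriv (fun x => ℓ x s) 0 = β * ℓ 0 s + Λ / 2 * deriv L0 s := by linarith
        rw [b']
        push_cast
        ring
      · have o := hode (j + 2) (by omega) (by omega) s
        have i1 : j + 2 - 1 = j + 1 := by omega
        rw [i1] at o
        simp only [hx, hp, hr, hq, he]
        rw [mul_sub, show j + 1 + 1 = j + 2 from rfl, o]
        push_cast
        field_simp
        ring)
    have B := aux_resid Λ D hΛ N hN (fun y => ℓ y s) (fun y => deriv (fun x => ℓ x s) y)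
      (fun y => deriv (fun x => deriv (fun x' => ℓ x' s) x) y)
      (fun y => deriv (fun τ => ℓ y τ) s) (fun y => deriv (fun x => deriv (fun τ => ℓ x τ) s) y)
      (fun y => hyD y s) (fun y => hyyD y s) (fun y => hytD y s) (hytcont s)
      (fun y hy => hpde y hy s hs) (hgΛ s hs) q rfl (fun j _ => rfl)
    refine A.trans ?_
    rw [div_le_iff₀ (by positivity)]
    refine B.trans (le_of_eq ?_)
    simp only [hI]; ring
  -- integrate in time
  have hmono : E t - h * Λ * (∫ s in (0:ℝ)..t, I s) ≤ E 0 := by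
    have hFd : ∀ s, HasDerivAt (fun s => E s - h * Λ * (∫ u in (0:ℝ)..s, I u))
        (2 * (∑ j ∈ Finset.range N, (D / h * (e (j + 1) s - e j s)) * (x (j + 1) s - x j s)
          + (β * e 0 s) * x 0 s) - h * Λ * I s) s := fun s =>
      (hEd s).sub ((intervalIntegral.integral_hasDerivAt_right (hIc.intervalIntegrable _ _)
        (hIc.stronglyMeasurableAtFilter _ _) hIc.continuousAt).const_mul _)
    have anti : AntitoneOn (fun s => E s - h * Λ * (∫ u in (0:ℝ)..s, I u)) (Ici 0) := by
      apply antitoneOn_of_deriv_nonpos (convex_Ici 0)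
      · exact fun s _ => (hFd s).continuousAt.continuousWithinAt
      · exact fun s _ => (hFd s).differentiableAt.differentiableWithinAt
      · intro s hs
        rw [interior_Ici] at hs
        rw [(hFd s).deriv]
        linarith [hEle s hs]
    have := anti (mem_Ici.mpr le_rfl) (mem_Ici.mpr ht) ht
    simpa using this
  -- spatial comparison at times t and 0
  have G1 := (aux_global Λ hΛ N hN (fun y => ℓh y t) (fun y => ℓ y t)
    (fun y => deriv (fun x => ℓ x t) y) (fun y => deriv (fun x => deriv (fun x' => ℓ x' t) x) y)
    (fun y => hyD y t) (fun y => hyyD y t) (hyycont t) (hVh t) (fun j => e j t) (by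
      intro j hj
      have := hnode (j + 1) (by omega) (by omega) t
      push_cast at this
      rw [add_sub_cancel_right] at this
      simp only [he]; rw [this])).2
  have G0 := (aux_global Λ hΛ N hN ℓ0h (fun y => ℓ y 0)
    (fun y => deriv (fun x => ℓ x 0) y) (fun y => deriv (fun x => deriv (fun x' => ℓ x' 0) x) y)
    (fun y => hyD y 0) (fun y => hyyD y 0) (hyycont 0) hV0 (fun j => e j 0) (by
      intro j hj
      have := hinit (j + 1) (by omega) (by omega)
      push_cast at this
      rw [add_sub_cancel_right] at this
      simp only [he]; rw [this])).1
  have F0 := aux_first_sq N hN Λ hΛ (fun j => e j 0) (heN 0 le_rfl)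
  simp only [← hh] at G1 G0 F0
  have hEs : ∀ s, E s = D * (∑ j ∈ Finset.range N, (e (j + 1) s - e j s) ^ 2 / h)
      + β * e 0 s ^ 2 := by
    intro s
    simp only [hE]
    rw [Finset.mul_sum]
    congr 1
    apply Finset.sum_congr rfl
    intro j _
    ring
  have hE0' := hEs 0
  have hEt' := hEs t
  set S0 := ∑ j ∈ Finset.range N, (e (j + 1) 0 - e j 0) ^ 2 / h with hS0
  set St := ∑ j ∈ Finset.range N, (e (j + 1) t - e j t) ^ 2 / h with hSt
  set X := ∫ y in (0:ℝ)..Λ, (deriv (fun x => ℓh x t - ℓ x t) y) ^ 2 with hX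
  set Y := ∫ y in (0:ℝ)..Λ, (deriv (fun x => deriv (fun x' => ℓ x' t) x) y) ^ 2 with hY
  set Y0 := ∫ y in (0:ℝ)..Λ, (deriv (fun x => deriv (fun x' => ℓ x' 0) x) y) ^ 2 with hY0
  set Z := ∫ y in (0:ℝ)..Λ, (deriv (fun x => ℓ0h x - ℓ x 0) y) ^ 2 with hZ
  change Real.sqrt X ≤ _ * h * (Real.sqrt Y0 + Real.sqrt Y) + _ * Real.sqrt Z
    + _ * Real.sqrt h * Real.sqrt (∫ s in (0:ℝ)..t, I s)
  set T := ∫ s in (0:ℝ)..t, I s with hT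
  have hT0 : 0 ≤ T := intervalIntegral.integral_nonneg ht (fun s _ => hI0 s)
  have hY0' : 0 ≤ Y := intervalIntegral.integral_nonneg hΛ.le (fun x _ => sq_nonneg _)
  have hZ0 : 0 ≤ Z := intervalIntegral.integral_nonneg hΛ.le (fun x _ => sq_nonneg _)
  have hSt' : St ≤ (1 + β * Λ / D) * Z + Λ / D * (h * T) := by
    have h1 : D * St ≤ (D + β * Λ) * Z + Λ * (h * T) := by
      have a1 : 0 ≤ β * e 0 t ^ 2 := by positivity
      have a2 : β * e 0 0 ^ 2 ≤ β * (Λ * Z) :=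
        mul_le_mul_of_nonneg_left (F0.trans (mul_le_mul_of_nonneg_left G0 hΛ.le)) hβpos.le
      have a3 : D * S0 ≤ D * Z := mul_le_mul_of_nonneg_left G0 hDpos.le
      linarith
    have h2 : (1 + β * Λ / D) * Z + Λ / D * (h * T) = ((D + β * Λ) * Z + Λ * (h * T)) / D := by
      field_simp
    rw [h2, le_div_iff₀ hDpos]; linarith
  set C := 1 + β * Λ / D + Λ / D with hC
  have c1 : 0 < β * Λ / D := by positivity
  have c2 : 0 < Λ / D := by positivity
  have hXle : X ≤ h ^ 2 * Y + C * Z + C * (h * T) := by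
    have b1 : (1 + β * Λ / D) * Z ≤ C * Z := mul_le_mul_of_nonneg_right (by linarith) hZ0
    have b2 : Λ / D * (h * T) ≤ C * (h * T) :=
      mul_le_mul_of_nonneg_right (by linarith) (by positivity)
    linarith
  have hC2 : C ≤ C ^ 2 := by nlinarith
  apply Real.sqrt_le_iff.mpr
  constructor
  · positivity
  · have q1 := Real.sq_sqrt hY0'
    have q2 := Real.sq_sqrt hZ0
    have q3 := Real.sq_sqrt hT0
    have q4 := Real.sq_sqrt hpos.le
    have n0 := Real.sqrt_nonneg Y0
    have n1 := Real.sqrt_nonneg Y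
    have n2 := Real.sqrt_nonneg Z
    have n3 := Real.sqrt_nonneg T
    have n4 := Real.sqrt_nonneg h
    have hC0 : 0 < C := by linarith
    clear_value X Y Y0 Z T C h
    have m1 : 0 ≤ C * h * Real.sqrt Y := by positivity
    have m2 : 0 ≤ C * Real.sqrt Z := by positivity
    have m3 : 0 ≤ C * Real.sqrt h * Real.sqrt T := by positivity
    have m4 : 0 ≤ C * h * Real.sqrt Y0 := by positivity
    calc X ≤ h ^ 2 * Y + C * Z + C * (h * T) := hXle
      _ ≤ C ^ 2 * (h ^ 2 * Y) + C ^ 2 * Z + C ^ 2 * (h * T) := by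
          have : 1 ≤ C ^ 2 := by linarith
          have t1 : h ^ 2 * Y ≤ C ^ 2 * (h ^ 2 * Y) := le_mul_of_one_le_left (by positivity) this
          gcongr
      _ = (C * h * Real.sqrt Y) ^ 2 + (C * Real.sqrt Z) ^ 2
          + (C * Real.sqrt h * Real.sqrt T) ^ 2 := by
          simp only [mul_pow, q1, q2, q3, q4]; ring
      _ ≤ (C * h * Real.sqrt Y + C * Real.sqrt Z + C * Real.sqrt h * Real.sqrt T) ^ 2 := by
          generalize C * h * Real.sqrt Y = u at *
          generalize C * Real.sqrt Z = v at *
          generalize C * Real.sqrt h * Real.sqrt T = w at *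
          have e : (u + v + w) ^ 2
            = u ^ 2 + v ^ 2 + w ^ 2 + 2 * (u * v + u * w + v * w) := by ring
          rw [e]
          linarith [mul_nonneg m1 m2, mul_nonneg m1 m3, mul_nonneg m2 m3]
      _ ≤ _ := by
          apply pow_le_pow_left₀ (by positivity)
          linarith
end
end
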